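/- Let μ be as in the class {μ}, so in particular μ(1/δ) ≥ (7/δ) ln(1/δ). Then there exist constants c₀ ∈ ℝ, C > 0 and δ₀ > 0 such that for all δ ∈ (0, δ₀]: |∫₀^{μ(1/δ)} |ζ(1/2+it)|² e^{−2δt} dt − (1/(2δ)) ln(1/δ) − D/(2δ) − c₀| ≤ C δ ln(1/δ), where D = c − ln(4π) and c is the Euler–Mascheroni constant. -/

import Mathlib

open MeasureTheory Filter Real Set

/-- `Z(t)² = |ζ(1/2 + it)|²`, the square of Hardy's function. -/
noncomputable def Z2 (t : ℝ) : ℝ := ‖riemannZeta (1/2 + t * Complex.I)‖ ^ 2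

open MeasureTheory Filter Real Set

namespace TKA
open scoped Topology

lemma lap_integrable {s r : ℂ} (hs : 0 < s.re) (hr : 0 < r.re) :
    IntegrableOn (fun t : ℝ => (t : ℂ) ^ (s - 1) * Complex.exp (-(r * t))) (Ioi 0) := by
  have h := integrableOn_rpow_mul_exp_neg_mul_rpow (p := 1) (s := s.re - 1) (b := r.re)
    (by linarith) one_pos hr
  refine Integrable.mono' h ?_ ?_
  · refine (ContinuousOn.mul ?_ ?_).aestronglyMeasurable measurableSet_Ioi
    · intro t ht
      refine ContinuousAt.continuousWithinAt ?_
      exact (Complex.continuousAt_ofReal_cpow_const _ _ (Or.inr (ne_of_gt ht)))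
    · fun_prop
  · filter_upwards [ae_restrict_mem measurableSet_Ioi] with t ht
    rw [norm_mul, Complex.norm_cpow_eq_rpow_re_of_pos ht, Complex.norm_exp]
    simp

lemma lap {s r : ℂ} (hs : 0 < s.re) (hr : 0 < r.re) :
    ∫ t in Ioi (0:ℝ), (t : ℂ) ^ (s - 1) * Complex.exp (-(r * t)) = r ^ (-s) * Complex.Gamma s := by
  set U : Set ℂ := {z | 0 < z.re} with hU
  have hUo : IsOpen U := isOpen_lt continuous_const Complex.continuous_re
  have hUc : Convex ℝ U := convex_halfSpace_re_gt 0
  have hd1 : DifferentiableOn ℂ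
      (fun r : ℂ => ∫ t in Ioi (0:ℝ), (t : ℂ) ^ (s - 1) * Complex.exp (-(r * t))) U := by
    intro r hr
    have hr' : 0 < r.re := hr
    refine DifferentiableAt.differentiableWithinAt ?_
    refine HasDerivAt.differentiableAt (hasDerivAt_integral_of_dominated_loc_of_deriv_le
      (μ := volume.restrict (Ioi (0:ℝ))) (𝕜 := ℂ)
      (F := fun (r : ℂ) (t : ℝ) => (t : ℂ) ^ (s - 1) * Complex.exp (-(r * t)))
      (F' := fun (r : ℂ) (t : ℝ) => (t : ℂ) ^ (s - 1) * (Complex.exp (-(r * t)) * (-t)))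
      (bound := fun t => t ^ s.re * Real.exp (- (r.re / 2) * t ^ (1:ℝ))) (x₀ := r)
      (s := Metric.ball r (r.re / 2)) (Metric.ball_mem_nhds _ (by positivity)) ?_ ?_ ?_ ?_ ?_ ?_).2
    · filter_upwards [hUo.mem_nhds hr] with z hz using (lap_integrable hs hz).aestronglyMeasurable
    · exact lap_integrable hs hr
    · refine (ContinuousOn.mul ?_ ?_).aestronglyMeasurable measurableSet_Ioi
      · intro t ht
        refine ContinuousAt.continuousWithinAt ?_
        exact (Complex.continuousAt_ofReal_cpow_const _ _ (Or.inr (ne_of_gt ht)))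
      · fun_prop
    · filter_upwards [ae_restrict_mem measurableSet_Ioi] with t ht z hz
      have ht' : 0 < t := ht
      have hz2 : r.re / 2 ≤ z.re := by
        have := (Complex.abs_re_le_norm (z - r)).trans (mem_ball_iff_norm.1 hz).le
        rw [Complex.sub_re, abs_le] at this
        linarith
      rw [norm_mul, norm_mul, Complex.norm_cpow_eq_rpow_re_of_pos ht, Complex.norm_exp, norm_neg,
        Complex.norm_real, Real.norm_of_nonneg ht'.le, Real.rpow_one]
      have e1 : t ^ s.re = t ^ (s - 1).re * t := by
        rw [← Real.rpow_add_one ht'.ne']; simp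
      rw [e1]
      have e2 : (-(z * (t:ℂ))).re = - z.re * t := by simp
      rw [e2]
      have : Real.exp (-z.re * t) ≤ Real.exp (-(r.re / 2) * t) := by
        apply Real.exp_le_exp.2; nlinarith
      calc t ^ (s - 1).re * (Real.exp (-z.re * t) * t)
          ≤ t ^ (s - 1).re * (Real.exp (-(r.re / 2) * t) * t) := by gcongr
        _ = _ := by ring
    · exact integrableOn_rpow_mul_exp_neg_mul_rpow (by linarith) one_pos (by positivity)
    · filter_upwards with t z hz
      have : HasDerivAt (fun z : ℂ => -(z * t)) (-(t:ℂ)) z := by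
        simpa using! ((hasDerivAt_id z).mul_const (t:ℂ)).neg
      exact (this.cexp).const_mul _
  have hd2 : DifferentiableOn ℂ (fun r : ℂ => r ^ (-s) * Complex.Gamma s) U := by
    intro r hr
    refine DifferentiableAt.differentiableWithinAt ?_
    refine DifferentiableAt.mul_const ?_ _
    exact (differentiableAt_id).cpow_const (Or.inl hr)
  have key := (hd1.analyticOnNhd hUo).eqOn_of_preconnected_of_frequently_eq (hd2.analyticOnNhd hUo)
    hUc.isPreconnected (z₀ := 1) (by simp [hU]) ?_
  · exact key hr
  · have hT : Tendsto (fun n : ℕ => ((1 + 1 / ((n:ℝ) + 1) : ℝ) : ℂ)) atTop (𝓝[≠] 1) := by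
      refine tendsto_nhdsWithin_iff.2 ⟨?_, ?_⟩
      · have := (tendsto_one_div_add_atTop_nhds_zero_nat (𝕜 := ℝ)).const_add 1
        have h2 := (Complex.continuous_ofReal.tendsto _).comp this
        simpa [Function.comp_def] using h2
      · filter_upwards with n
        have : (0:ℝ) < 1 / ((n:ℝ) + 1) := by positivity
        simp only [mem_compl_iff, mem_singleton_iff]
        intro h
        have : (1 + 1 / ((n:ℝ) + 1) : ℝ) = 1 := by exact_mod_cast h
        linarith
    refine hT.frequently (Frequently.of_forall fun n => ?_)
    have hp : (0:ℝ) < 1 + 1 / ((n:ℝ) + 1) := by positivity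
    have := Complex.integral_cpow_mul_exp_neg_mul_Ioi hs hp
    rw [this, one_div, Complex.inv_cpow, Complex.cpow_neg]
    rw [Complex.arg_ofReal_of_nonneg hp.le]; exact pi_pos.ne

/-- `1/(e^z-1)` -/
noncomputable def E (z : ℂ) : ℂ := (Complex.exp z - 1)⁻¹

lemma exp_sub_one_norm_ge (z : ℂ) : Real.exp z.re - 1 ≤ ‖Complex.exp z - 1‖ := by
  have := norm_sub_norm_le (Complex.exp z) 1
  rwa [Complex.norm_exp, norm_one] at this

lemma exp_sub_one_ne {z : ℂ} (hz : 0 < z.re) : Complex.exp z - 1 ≠ 0 := by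
  have h1 := exp_sub_one_norm_ge z
  have h2 : 1 < Real.exp z.re := Real.one_lt_exp_iff.2 hz
  exact norm_pos_iff.1 (by linarith)

lemma norm_E_le {z : ℂ} (hz : 0 < z.re) : ‖E z‖ ≤ (Real.exp z.re - 1)⁻¹ := by
  rw [E, norm_inv]
  have h2 : 1 < Real.exp z.re := Real.one_lt_exp_iff.2 hz
  exact inv_anti₀ (by linarith) (exp_sub_one_norm_ge z)

lemma hasSum_E {z : ℂ} (hz : 0 < z.re) :
    HasSum (fun n : ℕ => Complex.exp (-((n + 1 : ℕ) * z))) (E z) := by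
  have hlt : ‖Complex.exp (-z)‖ < 1 := by
    rw [Complex.norm_exp]; simpa using hz
  have h := (hasSum_geometric_of_norm_lt_one hlt).mul_left (Complex.exp (-z))
  have e0 : E z = Complex.exp (-z) * (1 - Complex.exp (-z))⁻¹ := by
    rw [E, Complex.exp_neg]
    have := exp_sub_one_ne hz
    have h0 := Complex.exp_ne_zero z
    field_simp
  rw [e0]
  refine h.congr_fun ?_
  · intro n
    rw [← Complex.exp_nat_mul, ← Complex.exp_add]
    congr 1; push_cast; ring

lemma differentiableAt_E {z : ℂ} (hz : Complex.exp z - 1 ≠ 0) : DifferentiableAt ℂ E z := by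
  unfold E
  exact ((Complex.differentiable_exp z).sub_const 1).inv hz

/-- The analytic version of `(e^z-1)/z`. -/
noncomputable def gg : ℂ → ℂ := dslope Complex.exp 0

lemma gg_diff : Differentiable ℂ gg := by
  have := (Complex.differentiableOn_dslope (f := Complex.exp) (s := univ) (c := 0) univ_mem).2
    Complex.differentiable_exp.differentiableOn
  exact fun z => (this z (mem_univ _)).differentiableAt univ_mem

lemma gg_zero : gg 0 = 1 := by
  simp [gg, dslope_same]

lemma gg_of_ne {z : ℂ} (hz : z ≠ 0) : gg z = (Complex.exp z - 1) / z := by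
  rw [gg, dslope_of_ne _ hz, slope_def_field]; simp

/-- The analytic version of `1/(e^z-1) - 1/z`. -/
noncomputable def ph : ℂ → ℂ := dslope (fun z => (gg z)⁻¹) 0

lemma ph_of_ne {z : ℂ} (hz : z ≠ 0) : ph z = E z - 1 / z := by
  rw [ph, dslope_of_ne _ hz, slope_def_field, gg_zero, gg_of_ne hz, E]
  by_cases h : Complex.exp z - 1 = 0
  · simp [h, neg_div]
  · field_simp; simp; ring

lemma ph_diffOn {U : Set ℂ} (hU : U ∈ 𝓝 0) (h : ∀ z ∈ U, gg z ≠ 0) : DifferentiableOn ℂ ph U := by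
  refine (Complex.differentiableOn_dslope hU).2 ?_
  intro z hz
  exact ((gg_diff z).inv (h z hz)).differentiableWithinAt

lemma deriv_gg_zero : deriv gg 0 = 1 / 2 := by
  have h1 : ∀ z, Complex.exp z = 1 + z * gg z := by
    intro z
    by_cases hz : z = 0
    · simp [hz]
    · rw [gg_of_ne hz]; field_simp; ring
  have h2 : ∀ z, Complex.exp z = gg z + z * deriv gg z := by
    intro z
    have e1 : HasDerivAt (fun z => 1 + z * gg z) (1 * gg z + z * deriv gg z) z :=
      ((hasDerivAt_id z).mul (gg_diff z).hasDerivAt).const_add 1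
    have e2 := Complex.hasDerivAt_exp z
    rw [show Complex.exp = fun z => 1 + z * gg z from funext h1] at e2
    have := e2.unique e1
    simp only [← h1] at this
    simpa using this
  have hdd : DifferentiableAt ℂ (deriv gg) 0 := by
    exact (gg_diff.analyticAt 0).deriv.differentiableAt
  have e1 : HasDerivAt (fun z => gg z + z * deriv gg z)
      (deriv gg 0 + (1 * deriv gg 0 + 0 * deriv (deriv gg) 0)) 0 :=
    (gg_diff 0).hasDerivAt.add ((hasDerivAt_id (0:ℂ)).mul hdd.hasDerivAt)
  have e2 := Complex.hasDerivAt_exp 0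
  rw [show Complex.exp = fun z => gg z + z * deriv gg z from funext h2] at e2
  have := e2.unique e1
  simp only [← h2] at this
  simp only [Complex.exp_zero] at this
  linear_combination -this / 2

lemma ph_zero : ph 0 = -1 / 2 := by
  rw [ph, dslope_same]
  have : HasDerivAt (fun z => (gg z)⁻¹) (-deriv gg 0 / gg 0 ^ 2) 0 :=
    (gg_diff 0).hasDerivAt.inv (by rw [gg_zero]; exact one_ne_zero)
  rw [this.deriv, deriv_gg_zero, gg_zero]; norm_num

lemma gg_ne_zero_of_im {z : ℂ} (hz : |z.im| < 2 * π) : gg z ≠ 0 := by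
  by_cases h0 : z = 0
  · rw [h0, gg_zero]; exact one_ne_zero
  rw [gg_of_ne h0]
  refine div_ne_zero ?_ h0
  intro h
  rw [sub_eq_zero, Complex.exp_eq_one_iff] at h
  obtain ⟨n, hn⟩ := h
  have him : z.im = n * (2 * π) := by rw [hn]; simp
  have hn0 : n ≠ 0 := by
    rintro rfl; simp at hn; exact h0 hn
  rw [him, abs_mul, abs_of_pos Real.two_pi_pos] at hz
  have : (1:ℝ) ≤ |(n:ℝ)| := by
    rw [← Int.cast_abs]; exact_mod_cast Int.one_le_abs hn0
  nlinarith [Real.pi_pos]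

lemma ph_differentiableAt {z : ℂ} (hz : |z.im| < 2 * π) : DifferentiableAt ℂ ph z := by
  have hopen : IsOpen {z : ℂ | |z.im| < 2 * π} :=
    isOpen_lt (continuous_abs.comp Complex.continuous_im) continuous_const
  exact (ph_diffOn (hopen.mem_nhds (by simp [Real.pi_pos])) (fun z hz => gg_ne_zero_of_im hz)
    z hz).differentiableAt (hopen.mem_nhds hz)

lemma ph_isBigO : (fun z => ph z + 1 / 2) =O[𝓝 0] (fun z => z) := by
  have h := (ph_differentiableAt (z := 0) (by simp [Real.pi_pos])).isBigO_sub
  simpa [ph_zero, neg_div] using h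

end TKA

open MeasureTheory Filter Real Set

namespace TKA
open scoped Topology

lemma re_mul_ofReal_pos {a : ℂ} (ha : 0 < a.re) {x : ℝ} (hx : 0 < x) : 0 < (a * x).re := by
  simpa using mul_pos ha hx

lemma ne_zero_of_re {a : ℂ} (ha : 0 < a.re) : a ≠ 0 := by
  rintro rfl; simp at ha

lemma continuousOn_Eax {a : ℂ} (ha : 0 < a.re) :
    ContinuousOn (fun x : ℝ => E (a * x)) (Ioi 0) := by
  intro x hx
  have h1 : ContinuousAt E (a * x) :=
    (differentiableAt_E (exp_sub_one_ne (re_mul_ofReal_pos ha hx))).continuousAt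
  have h2 : ContinuousAt (fun x : ℝ => a * (x : ℂ)) x := by fun_prop
  exact (ContinuousAt.comp (f := fun x : ℝ => a * (x : ℂ)) h1 h2).continuousWithinAt

lemma Eax_isBigO_top {a : ℂ} (ha : 0 < a.re) :
    (fun x : ℝ => E (a * x)) =O[atTop] (fun x => Real.exp (-a.re * x)) := by
  refine Asymptotics.IsBigO.of_bound 2 ?_
  filter_upwards [eventually_ge_atTop (1 / a.re), eventually_gt_atTop 0] with x hx hx0
  refine (norm_E_le (re_mul_ofReal_pos ha hx0)).trans ?_
  have e1 : (a * x).re = a.re * x := by simp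
  have h1 : 1 ≤ a.re * x := by rwa [div_le_iff₀' ha] at hx
  have h2 : 2 ≤ Real.exp (a.re * x) := by
    have := Real.add_one_le_exp (a.re * x); linarith
  rw [e1, Real.norm_of_nonneg (Real.exp_pos _).le, neg_mul, Real.exp_neg,
    ← div_eq_mul_inv, inv_le_comm₀ (by linarith) (by positivity), inv_div]
  linarith

/-- regularised function. -/
noncomputable def f2 (a : ℂ) (x : ℝ) : ℂ :=
  E (a * x) - (Ioc (0:ℝ) 1).indicator (fun x : ℝ => 1 / (a * x) - 1 / 2) x

lemma locInt_Eax {a : ℂ} (ha : 0 < a.re) :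
    LocallyIntegrableOn (fun x : ℝ => E (a * x)) (Ioi 0) :=
  (continuousOn_Eax ha).locallyIntegrableOn measurableSet_Ioi

lemma locInt_f2 {a : ℂ} (ha : 0 < a.re) : LocallyIntegrableOn (f2 a) (Ioi 0) := by
  refine (locInt_Eax ha).sub ?_
  have h : LocallyIntegrableOn (fun x : ℝ => 1 / (a * x) - 1 / 2) (Ioi 0) := by
    refine ContinuousOn.locallyIntegrableOn ?_ measurableSet_Ioi
    intro x hx
    have : (a * (x:ℂ)) ≠ 0 := ne_zero_of_re (re_mul_ofReal_pos ha hx)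
    refine ContinuousAt.continuousWithinAt ?_
    fun_prop (disch := assumption)
  refine h.mono ?_ ?_
  · refine Measurable.aestronglyMeasurable ?_
    exact Measurable.indicator (by fun_prop) measurableSet_Ioc
  · filter_upwards with x using norm_indicator_le_norm_self _ _

lemma f2_isBigO_top {a : ℂ} (ha : 0 < a.re) :
    f2 a =O[atTop] (fun x => Real.exp (-a.re * x)) := by
  refine (Eax_isBigO_top ha).congr' ?_ EventuallyEq.rfl
  filter_upwards [eventually_gt_atTop 1] with x hx
  rw [f2, indicator_of_notMem, sub_zero]
  simp only [mem_Ioc, not_and, not_le]; intro _; exact hx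

lemma f2_eq_ph {a : ℂ} (ha : 0 < a.re) {x : ℝ} (hx : x ∈ Ioc (0:ℝ) 1) :
    f2 a x = ph (a * x) + 1 / 2 := by
  rw [f2, indicator_of_mem hx, ph_of_ne (ne_zero_of_re (re_mul_ofReal_pos ha hx.1))]; ring

lemma f2_isBigO_zero {a : ℂ} (ha : 0 < a.re) :
    f2 a =O[𝓝[>] 0] (fun x : ℝ => x ^ (-(-1) : ℝ)) := by
  have hT : Tendsto (fun x : ℝ => a * (x:ℂ)) (𝓝[>] 0) (𝓝 0) := by
    refine Tendsto.mono_left ?_ nhdsWithin_le_nhds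
    have : ContinuousAt (fun x : ℝ => a * (x:ℂ)) 0 := by fun_prop
    simpa [ContinuousAt] using this
  have h := ph_isBigO.comp_tendsto hT
  have h2 : (fun x : ℝ => ph (a * x) + 1 / 2) =O[𝓝[>] 0] (fun x : ℝ => x) := by
    refine h.trans ?_
    refine Asymptotics.IsBigO.of_bound ‖a‖ ?_
    filter_upwards with x
    simp
  refine h2.congr' ?_ ?_
  · filter_upwards [Ioc_mem_nhdsGT (zero_lt_one)] with x hx
    rw [f2_eq_ph ha hx]
  · filter_upwards with x
    simp

lemma f2_mellinConv {a s : ℂ} (ha : 0 < a.re) (hs : -1 < s.re) : MellinConvergent (f2 a) s :=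
  mellinConvergent_of_isBigO_rpow_exp ha (locInt_f2 ha) (f2_isBigO_top ha) (f2_isBigO_zero ha) hs

lemma f2_mellin_diff {a s : ℂ} (ha : 0 < a.re) (hs : -1 < s.re) :
    DifferentiableAt ℂ (mellin (f2 a)) s :=
  mellin_differentiableAt_of_isBigO_rpow_exp ha (locInt_f2 ha) (f2_isBigO_top ha)
    (f2_isBigO_zero ha) hs

lemma nat_mul_cpow (n : ℕ) {a : ℂ} (ha : a ≠ 0) (s : ℂ) :
    (((n + 1 : ℕ) : ℂ) * a) ^ s = ((n + 1 : ℕ) : ℂ) ^ s * a ^ s := by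
  have hn : (0:ℝ) < ((n + 1 : ℕ) : ℝ) := by positivity
  have hn' : ((n + 1 : ℕ) : ℂ) ≠ 0 := Nat.cast_ne_zero.2 (by omega)
  rw [Complex.cpow_def_of_ne_zero (mul_ne_zero hn' ha), Complex.cpow_def_of_ne_zero hn',
    Complex.cpow_def_of_ne_zero ha, ← Complex.exp_add]
  have := Complex.log_ofReal_mul hn ha
  rw [Complex.ofReal_natCast] at this
  rw [this, ← Complex.natCast_log]
  ring_nf

lemma mellin_E {a s : ℂ} (ha : 0 < a.re) (hs : 1 < s.re) :
    mellin (fun x : ℝ => E (a * x)) s = a ^ (-s) * Complex.Gamma s * riemannZeta s := by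
  have hs0 : 0 < s.re := by linarith
  have hre : ∀ n : ℕ, 0 < (((n + 1 : ℕ) : ℂ) * a).re := by
    intro n
    rw [← Complex.ofReal_natCast, Complex.re_ofReal_mul]; positivity
  have hkey := hasSum_integral_of_summable_integral_norm (μ := volume.restrict (Ioi (0:ℝ)))
    (F := fun (n : ℕ) (t : ℝ) => (t : ℂ) ^ (s - 1) * Complex.exp (-((((n + 1 : ℕ) : ℂ) * a) * t)))
    (fun n => lap_integrable hs0 (hre n)) ?_
  · simp_rw [lap hs0 (hre _)] at hkey
    have e1 : ∫ t in Ioi (0:ℝ), ∑' n : ℕ, (t : ℂ) ^ (s - 1) *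
        Complex.exp (-((((n + 1 : ℕ) : ℂ) * a) * t)) = mellin (fun x : ℝ => E (a * x)) s := by
      rw [mellin]
      refine setIntegral_congr_fun measurableSet_Ioi fun t ht => ?_
      have := (hasSum_E (re_mul_ofReal_pos ha ht)).mul_left ((t : ℂ) ^ (s - 1))
      simp only [smul_eq_mul]
      rw [← this.tsum_eq]
      refine tsum_congr fun n => ?_
      rw [mul_assoc]
    rw [e1] at hkey
    rw [← hkey.tsum_eq, zeta_eq_tsum_one_div_nat_add_one_cpow hs, ← tsum_mul_left]
    refine tsum_congr fun n => ?_
    rw [nat_mul_cpow n (ne_zero_of_re ha), Complex.cpow_neg ((n + 1 : ℕ) : ℂ)]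
    push_cast
    ring
  · have hsum : Summable fun n : ℕ => ((1 / a.re) ^ s.re * Real.Gamma s.re) *
        (1 / (((n + 1 : ℕ) : ℝ)) ^ s.re) := by
      refine Summable.mul_left _ ?_
      exact (summable_nat_add_iff 1).2 (Real.summable_one_div_nat_rpow.2 hs)
    refine hsum.congr fun n => ?_
    have hn : (0:ℝ) < ((n + 1 : ℕ) : ℝ) := by positivity
    have := Real.integral_rpow_mul_exp_neg_mul_Ioi hs0 (r := ((n + 1 : ℕ) : ℝ) * a.re)
      (by positivity)
    rw [← setIntegral_congr_fun measurableSet_Ioi (f := fun t : ℝ => t ^ (s.re - 1) *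
      Real.exp (-(((n + 1 : ℕ) : ℝ) * a.re * t)))]
    · rw [this, one_div (((n + 1 : ℕ) : ℝ) * a.re), mul_inv,
        Real.mul_rpow (by positivity) (by positivity), Real.inv_rpow hn.le, one_div, one_div]
      ring
    · intro t ht
      simp only
      rw [norm_mul, Complex.norm_cpow_eq_rpow_re_of_pos ht, Complex.norm_exp]
      congr 2
      rw [Complex.neg_re, Complex.re_mul_ofReal, ← Complex.ofReal_natCast, Complex.re_ofReal_mul]

lemma mellin_f2_of_one_lt {a s : ℂ} (ha : 0 < a.re) (hs : 1 < s.re) :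
    mellin (f2 a) s = a ^ (-s) * Complex.Gamma s * riemannZeta s - 1 / (a * (s - 1)) +
      1 / (2 * s) := by
  have h1 := hasMellin_one_Ioc (s := s) (by linarith)
  have h2 := hasMellin_cpow_Ioc (-1) (s := s) (by simpa using hs)
  have h1' := hasMellin_const_smul h1.1 (1 / 2 : ℂ)
  have h2' := hasMellin_const_smul h2.1 (1 / a : ℂ)
  have hf := f2_mellinConv ha (s := s) (by linarith)
  have h3 := hasMellin_add hf h2'.1
  have h4 := hasMellin_sub h3.1 h1'.1
  have e := h4.2
  have e' : mellin (fun x : ℝ => E (a * x)) s = mellin (fun t : ℝ => f2 a t +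
      (1 / a : ℂ) • (Ioc (0:ℝ) 1).indicator (fun t : ℝ => (t:ℂ) ^ (-1:ℂ)) t -
      (1 / 2 : ℂ) • (Ioc (0:ℝ) 1).indicator (fun _ => (1:ℂ)) t) s := by
    rw [mellin, mellin]
    refine setIntegral_congr_fun measurableSet_Ioi fun t ht => ?_
    congr 1
    rw [f2]
    by_cases ht1 : t ∈ Ioc (0:ℝ) 1
    · simp only [indicator_of_mem ht1, Complex.cpow_neg_one, smul_eq_mul]
      have : a ≠ 0 := ne_zero_of_re ha
      have : (t : ℂ) ≠ 0 := by exact_mod_cast (ne_of_gt ht)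
      field_simp
      ring
    · simp [indicator_of_notMem ht1]
  rw [← e', mellin_E ha hs, h3.2, h2'.2, h1'.2, h1.2, h2.2] at e
  simp only [smul_eq_mul] at e
  rw [e]
  have : a ≠ 0 := ne_zero_of_re ha
  have : s ≠ 0 := by rintro rfl; simp at hs; linarith
  have : s - 1 ≠ 0 := by
    intro h; have : s = 1 := by linear_combination h
    rw [this] at hs; simp at hs
  have : s + -1 ≠ 0 := by rwa [← sub_eq_add_neg]
  field_simp
  ring

/-- entire-ised identity -/
lemma mellin_f2_key {a s : ℂ} (ha : 0 < a.re) (hs : -1 < s.re) :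
    s * (s - 1) * mellin (f2 a) s = a ^ (-s) * Complex.Gamma (s + 1) * riemannZeta₁ s
      - s / a + (s - 1) / 2 := by
  set U : Set ℂ := {z | -1 < z.re} with hU
  have hUo : IsOpen U := isOpen_lt continuous_const Complex.continuous_re
  have hUc : Convex ℝ U := convex_halfSpace_re_gt (-1)
  have ha0 : a ≠ 0 := ne_zero_of_re ha
  have hd1 : DifferentiableOn ℂ (fun s => s * (s - 1) * mellin (f2 a) s) U := by
    intro s hs
    refine DifferentiableAt.differentiableWithinAt ?_
    exact (by fun_prop : DifferentiableAt ℂ (fun s : ℂ => s * (s - 1)) s).mul (f2_mellin_diff ha hs)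
  have hd2 : DifferentiableOn ℂ (fun s => a ^ (-s) * Complex.Gamma (s + 1) * riemannZeta₁ s
      - s / a + (s - 1) / 2) U := by
    intro s hs
    refine DifferentiableAt.differentiableWithinAt ?_
    have hs' : -1 < s.re := hs
    have hG : DifferentiableAt ℂ (fun s => Complex.Gamma (s + 1)) s := by
      refine DifferentiableAt.comp (g := Complex.Gamma) (f := fun s : ℂ => s + 1) s
        (Complex.differentiableAt_Gamma _ ?_) (by fun_prop)
      intro m h
      have := congrArg Complex.re h
      simp at this
      have : (0:ℝ) ≤ m := m.cast_nonneg
      linarith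
    have hA : DifferentiableAt ℂ (fun s => a ^ (-s)) s :=
      (differentiableAt_id.neg).const_cpow (Or.inl ha0)
    have hZ : DifferentiableAt ℂ riemannZeta₁ s := differentiable_riemannZeta₁ s
    exact (((hA.mul hG).mul hZ).sub (by fun_prop)).add (by fun_prop)
  have key := (hd1.analyticOnNhd hUo).eqOn_of_preconnected_of_eventuallyEq (hd2.analyticOnNhd hUo)
    hUc.isPreconnected (z₀ := 2) (by simp [hU]; norm_num) ?_
  · exact key hs
  · have : {z : ℂ | 1 < z.re} ∈ 𝓝 (2:ℂ) :=
      (isOpen_lt continuous_const Complex.continuous_re).mem_nhds (by simp)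
    filter_upwards [this] with s hs
    have hs' : 1 < s.re := hs
    have h1 : s ≠ 1 := by rintro rfl; simp at hs'
    have h0 : s ≠ 0 := by rintro rfl; simp at hs'; linarith
    have h1' : s - 1 ≠ 0 := sub_ne_zero.2 h1
    rw [mellin_f2_of_one_lt ha hs, riemannZeta_eq_inv_sub_mul h1, Complex.Gamma_add_one _ h0]
    field_simp

lemma mellin_f2_one {a : ℂ} (ha : 0 < a.re) :
    mellin (f2 a) 1 = - Complex.log a / a + 1 / 2 := by
  have ha0 : a ≠ 0 := ne_zero_of_re ha
  have hA : HasDerivAt (fun s : ℂ => a ^ (-s)) (a ^ (-(1:ℂ)) * Complex.log a * (-1)) 1 :=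
    ((hasDerivAt_id (1:ℂ)).neg).const_cpow (Or.inl ha0)
  have hG : HasDerivAt (fun s : ℂ => Complex.Gamma (s + 1))
      (Complex.Gamma 1 + 1 * (-(Real.eulerMascheroniConstant : ℂ))) 1 := by
    have h : HasDerivAt (fun s : ℂ => s * Complex.Gamma s)
      (1 * Complex.Gamma 1 + 1 * (-(Real.eulerMascheroniConstant : ℂ))) 1 :=
      (hasDerivAt_id (1:ℂ)).mul Complex.hasDerivAt_Gamma_one
    rw [one_mul] at h
    refine h.congr_of_eventuallyEq ?_
    filter_upwards [isOpen_ne.mem_nhds (one_ne_zero (α := ℂ))] with s hs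
    rw [Complex.Gamma_add_one _ hs]
  have hZ : HasDerivAt riemannZeta₁ (Real.eulerMascheroniConstant : ℂ) 1 := by
    rw [← deriv_riemannZeta₁_one]; exact (differentiable_riemannZeta₁ 1).hasDerivAt
  have hR := ((((hA.mul hG).mul hZ).sub ((hasDerivAt_id (1:ℂ)).div_const a)).add
    (((hasDerivAt_id (1:ℂ)).sub_const 1).div_const 2))
  have hL : HasDerivAt (fun s : ℂ => s * (s - 1) * mellin (f2 a) s)
    ((1 * (1 - 1) + 1 * 1) * mellin (f2 a) 1 + 1 * (1 - 1) * deriv (mellin (f2 a)) 1) 1 := by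
    have h := ((hasDerivAt_id (1:ℂ)).mul ((hasDerivAt_id (1:ℂ)).sub_const 1)).mul
      (f2_mellin_diff ha (s := 1) (by simp)).hasDerivAt
    exact h
  have hEq : (fun s : ℂ => s * (s - 1) * mellin (f2 a) s) =ᶠ[𝓝 1]
      (fun s => a ^ (-s) * Complex.Gamma (s + 1) * riemannZeta₁ s - s / a + (s - 1) / 2) := by
    have : {z : ℂ | -1 < z.re} ∈ 𝓝 (1:ℂ) :=
      (isOpen_lt continuous_const Complex.continuous_re).mem_nhds (by simp)
    filter_upwards [this] with s hs
    exact mellin_f2_key ha hs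
  have hL' := hL.congr_of_eventuallyEq hEq.symm
  have := hL'.unique hR
  have hG2 : Complex.Gamma (1 + 1) = 1 := by
    rw [Complex.Gamma_add_one _ one_ne_zero, Complex.Gamma_one, one_mul]
  simp [riemannZeta₁_one, hG2, Complex.cpow_neg_one] at this
  rw [this]
  field_simp
  ring

lemma mellin_f2_zero {a : ℂ} (ha : 0 < a.re) :
    mellin (f2 a) 0 = Complex.log a / 2 + Real.eulerMascheroniConstant / 2 -
      Complex.log (2 * π) / 2 + 1 / a := by
  have ha0 : a ≠ 0 := ne_zero_of_re ha
  have hA : HasDerivAt (fun s : ℂ => a ^ (-s)) (a ^ (-(0:ℂ)) * Complex.log a * (-1)) 0 :=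
    ((hasDerivAt_id (0:ℂ)).neg).const_cpow (Or.inl ha0)
  have hG : HasDerivAt (fun s : ℂ => Complex.Gamma (s + 1))
      (-(Real.eulerMascheroniConstant : ℂ)) 0 := by
    have := Complex.hasDerivAt_Gamma_one
    rw [← zero_add (1:ℂ)] at this
    exact this.comp_add_const 0 1
  have hZ : HasDerivAt riemannZeta₁ (riemannZeta 0 - deriv riemannZeta 0) 0 := by
    have h : HasDerivAt (fun s : ℂ => (s - 1) * riemannZeta s)
        (1 * riemannZeta 0 + (0 - 1) * deriv riemannZeta 0) 0 :=
      ((hasDerivAt_id (0:ℂ)).sub_const 1).mul (differentiableAt_riemannZeta zero_ne_one).hasDerivAt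
    have h2 : (1 * riemannZeta 0 + (0 - 1) * deriv riemannZeta 0) =
      riemannZeta 0 - deriv riemannZeta 0 := by ring
    rw [h2] at h
    refine h.congr_of_eventuallyEq ?_
    filter_upwards [isOpen_ne.mem_nhds (zero_ne_one (α := ℂ))] with s hs
    have : s - 1 ≠ 0 := sub_ne_zero.2 hs
    rw [riemannZeta_eq_inv_sub_mul hs]; field_simp
  have hZ0 : riemannZeta₁ 0 = 1 / 2 := by
    have h := riemannZeta_eq_inv_sub_mul (zero_ne_one (α := ℂ))
    rw [riemannZeta_zero] at h
    simp at h
    linear_combination h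
  have hR := ((((hA.mul hG).mul hZ).sub ((hasDerivAt_id (0:ℂ)).div_const a)).add
    (((hasDerivAt_id (0:ℂ)).sub_const 1).div_const 2))
  have hL : HasDerivAt (fun s : ℂ => s * (s - 1) * mellin (f2 a) s)
    ((1 * (0 - 1) + 0 * 1) * mellin (f2 a) 0 + 0 * (0 - 1) * deriv (mellin (f2 a)) 0) 0 := by
    have h := ((hasDerivAt_id (0:ℂ)).mul ((hasDerivAt_id (0:ℂ)).sub_const 1)).mul
      (f2_mellin_diff ha (s := 0) (by simp)).hasDerivAt
    exact h
  have hEq : (fun s : ℂ => s * (s - 1) * mellin (f2 a) s) =ᶠ[𝓝 0]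
      (fun s => a ^ (-s) * Complex.Gamma (s + 1) * riemannZeta₁ s - s / a + (s - 1) / 2) := by
    have : {z : ℂ | -1 < z.re} ∈ 𝓝 (0:ℂ) :=
      (isOpen_lt continuous_const Complex.continuous_re).mem_nhds (by simp)
    filter_upwards [this] with s hs
    exact mellin_f2_key ha hs
  have hL' := hL.congr_of_eventuallyEq hEq.symm
  have := hL'.unique hR
  simp [hZ0, riemannZeta_zero, deriv_riemannZeta_zero] at this
  rw [neg_eq_iff_eq_neg] at this
  rw [this]
  field_simp
  ring

lemma ph_continuous_ax {a : ℂ} (ha : 0 < a.re) {x : ℝ} (hx : 0 < x) :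
    ContinuousAt (fun x : ℝ => ph (a * x)) x := by
  have h1 : ContinuousAt (fun x : ℝ => E (a * x) - 1 / (a * x)) x := by
    have h2 := (continuousOn_Eax ha).continuousAt (Ioi_mem_nhds hx)
    have : (a * (x:ℂ)) ≠ 0 := ne_zero_of_re (re_mul_ofReal_pos ha hx)
    refine h2.sub ?_
    fun_prop (disch := assumption)
  refine h1.congr ?_
  filter_upwards [Ioi_mem_nhds hx] with y hy
  rw [ph_of_ne (ne_zero_of_re (re_mul_ofReal_pos ha hy))]

lemma hasMellin_neg_one_Ioi {s : ℂ} (hs : s.re < 1) :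
    HasMellin (indicator (Ioi (1:ℝ)) (fun t : ℝ => (t:ℂ)⁻¹)) s (-1 / (s - 1)) := by
  have h1 : s - 1 ≠ 0 := by
    intro h; have : s = 1 := by linear_combination h
    rw [this] at hs; simp at hs
  have hb : (s - 2).re < -1 := by simp; linarith
  have e : ∀ t ∈ Ioi (1:ℝ), (t:ℂ) ^ (s - 1) * (t:ℂ)⁻¹ = (t:ℂ) ^ (s - 2) := by
    intro t ht
    have : (t:ℂ) ≠ 0 := by
      have : (0:ℝ) < t := lt_trans one_pos ht
      exact_mod_cast this.ne'
    rw [← Complex.cpow_neg_one, ← Complex.cpow_add _ _ this]; ring_nf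
  have hsub : Ioi (1:ℝ) ⊆ Ioi 0 := Ioi_subset_Ioi zero_le_one
  constructor
  · rw [MellinConvergent]
    simp_rw [← indicator_smul]
    rw [IntegrableOn, integrable_indicator_iff measurableSet_Ioi, IntegrableOn,
      Measure.restrict_restrict_of_subset hsub]
    refine IntegrableOn.congr_fun (integrableOn_Ioi_cpow_of_lt hb one_pos) ?_ measurableSet_Ioi
    intro t ht
    simp [e t ht]
  · rw [mellin]
    simp_rw [← indicator_smul]
    rw [integral_indicator measurableSet_Ioi, Measure.restrict_restrict_of_subset hsub]
    simp_rw [smul_eq_mul]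
    rw [setIntegral_congr_fun measurableSet_Ioi e, integral_Ioi_cpow_of_lt hb one_pos]
    rw [Complex.ofReal_one, Complex.one_cpow]
    ring_nf

lemma ph_mellin_strip {a s : ℂ} (ha : 0 < a.re) (hs0 : 0 < s.re) (hs1 : s.re < 1) :
    HasMellin (fun x : ℝ => ph (a * x)) s (a ^ (-s) * Complex.Gamma s * riemannZeta s) := by
  have hf := f2_mellinConv ha (s := s) (by linarith)
  have h1 := hasMellin_const_smul (hasMellin_one_Ioc hs0).1 (1 / 2 : ℂ)
  have h2 := hasMellin_const_smul (hasMellin_neg_one_Ioi hs1).1 (1 / a : ℂ)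
  have h3 := hasMellin_sub (hasMellin_sub hf h1.1).1 h2.1
  have ha0 : a ≠ 0 := ne_zero_of_re ha
  have e : ∀ t ∈ Ioi (0:ℝ), f2 a t - (1 / 2 : ℂ) • (Ioc (0:ℝ) 1).indicator (fun _ => (1:ℂ)) t -
      (1 / a : ℂ) • (Ioi (1:ℝ)).indicator (fun t : ℝ => (t:ℂ)⁻¹) t = ph (a * t) := by
    intro t ht
    have ht0 : (t : ℂ) ≠ 0 := by exact_mod_cast (ne_of_gt ht)
    rw [ph_of_ne (ne_zero_of_re (re_mul_ofReal_pos ha ht)), f2]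
    by_cases ht1 : t ≤ 1
    · have hm : t ∈ Ioc (0:ℝ) 1 := ⟨ht, ht1⟩
      rw [indicator_of_mem hm, indicator_of_mem hm, indicator_of_notMem (by simpa using ht1)]
      simp
      ring
    · have hm : t ∉ Ioc (0:ℝ) 1 := fun h => ht1 h.2
      rw [indicator_of_notMem hm, indicator_of_notMem hm, indicator_of_mem (by simpa using ht1)]
      simp [mul_comm]
  have h0 : s ≠ 0 := by rintro rfl; simp at hs0
  have h10 : s ≠ 1 := by rintro rfl; simp at hs1
  have h11 : s - 1 ≠ 0 := sub_ne_zero.2 h10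
  constructor
  · refine IntegrableOn.congr_fun h3.1 ?_ measurableSet_Ioi
    intro t ht
    simp only [Pi.sub_apply]
    congr 1
    exact e t ht
  · have : mellin (fun x : ℝ => ph (a * x)) s = mellin (fun t : ℝ => f2 a t - 
      (1 / 2 : ℂ) • (Ioc (0:ℝ) 1).indicator (fun _ => (1:ℂ)) t -
      (1 / a : ℂ) • (Ioi (1:ℝ)).indicator (fun t : ℝ => (t:ℂ)⁻¹) t) s := by
      rw [mellin, mellin]
      refine setIntegral_congr_fun measurableSet_Ioi fun t ht => ?_
      congr 1
      exact (e t ht).symm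
    rw [this, h3.2, (hasMellin_sub hf h1.1).2, h1.2, h2.2, (hasMellin_one_Ioc hs0).2,
      (hasMellin_neg_one_Ioi hs1).2]
    have hk := mellin_f2_key ha (s := s) (by linarith)
    have hk' : mellin (f2 a) s = (a ^ (-s) * Complex.Gamma (s + 1) * riemannZeta₁ s
      - s / a + (s - 1) / 2) / (s * (s - 1)) := by
      rw [← hk]; field_simp
    rw [hk', riemannZeta_eq_inv_sub_mul h10, Complex.Gamma_add_one _ h0, smul_eq_mul, smul_eq_mul]
    field_simp
    ring

end TKA

open MeasureTheory Filter Real Set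



namespace TKA
open scoped Topology FourierTransform

lemma exp_neg_cv_deriv :
    ∀ x ∈ (univ : Set ℝ), HasDerivWithinAt (rexp ∘ Neg.neg) (-rexp (-x)) univ x :=
  fun x _ ↦ mul_neg_one (rexp (-x)) ▸
    ((Real.hasDerivAt_exp (-x)).comp x (hasDerivAt_neg x)).hasDerivWithinAt

lemma exp_neg_cv_image : rexp ∘ Neg.neg '' (univ : Set ℝ) = Ioi 0 := by
  rw [Set.image_comp, Set.image_univ_of_surjective neg_surjective, Set.image_univ, Real.range_exp]

lemma exp_neg_cv_inj : (univ : Set ℝ).InjOn (rexp ∘ Neg.neg) :=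
  Real.exp_injective.injOn.comp neg_injective.injOn (univ.mapsTo_univ _)

lemma cv_integral (f : ℝ → ℝ) :
    ∫ x in Ioi (0:ℝ), f x = ∫ u : ℝ, rexp (-u) * f (rexp (-u)) := by
  rw [← exp_neg_cv_image, integral_image_eq_integral_abs_deriv_smul MeasurableSet.univ
    exp_neg_cv_deriv exp_neg_cv_inj]
  simp

lemma cv_integrable (f : ℝ → ℂ) (hf : IntegrableOn f (Ioi 0)) :
    Integrable (fun u : ℝ => (rexp (-u)) • f (rexp (-u))) := by
  rw [← exp_neg_cv_image, integrableOn_image_iff_integrableOn_abs_deriv_smul MeasurableSet.univ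
    exp_neg_cv_deriv exp_neg_cv_inj] at hf
  simpa using hf

lemma plancherel_cont {g : ℝ → ℂ} (hc : Continuous g) (hg : Integrable g)
    (hFg : Integrable (𝓕 g)) : ∫ ξ, ‖𝓕 g ξ‖ ^ 2 = ∫ x, ‖g x‖ ^ 2 := by
  have h1 : ∫ ξ, (innerSL ℂ) (𝓕 g ξ) (𝓕 g ξ) = ∫ x, (innerSL ℂ) (g x) (𝓕⁻ (𝓕 g) x) := by
    have hinv : ∀ x, VectorFourier.fourierIntegral 𝐞 volume (-(innerₗ ℝ).flip) (𝓕 g) x =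
        𝓕⁻ (𝓕 g) x := by
      intro x
      rw [Real.fourierInv_eq, VectorFourier.fourierIntegral]
      simp
    have h0 := VectorFourier.integral_sesq_fourierIntegral_eq_neg_flip
      (innerSL ℂ) (L := innerₗ ℝ) continuous_fourierChar continuous_inner hg hFg
    simp_rw [hinv] at h0
    exact h0
  rw [hc.fourierInv_fourier_eq hg hFg] at h1
  apply Complex.ofRealLI.injective
  simpa [← LinearIsometry.integral_comp_comm, inner_self_eq_norm_sq_to_K] using h1

lemma integrable_exp_neg_abs {c : ℝ} (hc : 0 < c) : Integrable (fun t : ℝ => rexp (-c * |t|)) := by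
  have h1 : IntegrableOn (fun t : ℝ => rexp (-c * |t|)) (Ioi 0) := by
    refine (integrableOn_exp_mul_Ioi (neg_lt_zero.2 hc) 0).congr_fun ?_ measurableSet_Ioi
    intro t ht
    simp only [abs_of_pos (show 0 < t from ht)]
  have h2 : IntegrableOn (fun t : ℝ => rexp (-c * |t|)) (Iic 0) := by
    have := (integrableOn_Ici_iff_integrableOn_Ioi).2 h1
    have h3 := IntegrableOn.comp_neg this
    simpa using h3
  rw [← integrableOn_univ, ← Iic_union_Ioi (a := (0:ℝ))]
  exact h2.union h1

/-- the point `1/2+it`. -/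
noncomputable def hl (t : ℝ) : ℂ := 1/2 + t * Complex.I

lemma hl_re (t : ℝ) : (hl t).re = 1/2 := by simp [hl]
lemma hl_im (t : ℝ) : (hl t).im = t := by simp [hl]

noncomputable def GZ (t : ℝ) : ℝ := ‖Complex.Gamma (hl t) * riemannZeta (hl t)‖

noncomputable def aa (θ : ℝ) : ℂ := Complex.exp (θ * Complex.I)

lemma aa_re (θ : ℝ) : (aa θ).re = Real.cos θ := by simp [aa, Complex.exp_ofReal_mul_I_re]
lemma aa_im (θ : ℝ) : (aa θ).im = Real.sin θ := by simp [aa, Complex.exp_ofReal_mul_I_im]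
lemma aa_norm (θ : ℝ) : ‖aa θ‖ = 1 := by simp [aa, Complex.norm_exp_ofReal_mul_I]

lemma aa_re_pos {θ : ℝ} (h1 : -(π/2) < θ) (h2 : θ < π / 2) : 0 < (aa θ).re := by
  rw [aa_re]; exact Real.cos_pos_of_mem_Ioo ⟨h1, h2⟩

lemma aa_log {θ : ℝ} (h1 : -(π/2) < θ) (h2 : θ < π / 2) : Complex.log (aa θ) = θ * Complex.I := by
  rw [aa, Complex.log_exp] <;> simp <;> linarith [Real.pi_pos]

lemma aa_cpow {θ : ℝ} (h1 : -(π/2) < θ) (h2 : θ < π / 2) (t : ℝ) :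
    ‖(aa θ) ^ (-(hl t))‖ = rexp (θ * t) := by
  rw [Complex.cpow_def_of_ne_zero (ne_zero_of_re (aa_re_pos h1 h2)), aa_log h1 h2, Complex.norm_exp]
  congr 1
  simp [hl_im]

lemma mellin_norm {θ : ℝ} (h1 : -(π/2) < θ) (h2 : θ < π / 2) (t : ℝ) :
    ‖mellin (fun x : ℝ => ph (aa θ * x)) (hl t)‖ = rexp (θ * t) * GZ t := by
  rw [(ph_mellin_strip (aa_re_pos h1 h2) (by rw [hl_re]; norm_num) (by rw [hl_re]; norm_num)).2,
    mul_assoc, norm_mul, aa_cpow h1 h2, GZ]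

lemma GZ_bound_one {θ : ℝ} (h1 : -(π/2) < θ) (h2 : θ < π / 2) :
    ∃ C, ∀ t, rexp (θ * t) * GZ t ≤ C := by
  refine ⟨∫ x in Ioi (0:ℝ), x ^ (-(1/2) : ℝ) * ‖ph (aa θ * x)‖, fun t => ?_⟩
  rw [← mellin_norm h1 h2, mellin]
  refine (norm_integral_le_integral_norm _).trans (le_of_eq ?_)
  refine setIntegral_congr_fun measurableSet_Ioi fun x hx => ?_
  rw [norm_smul, Complex.norm_cpow_eq_rpow_re_of_pos hx]
  congr 2
  simp [hl_re]; norm_num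

lemma GZ_bound {θ : ℝ} (h1 : 0 ≤ θ) (h2 : θ < π / 2) :
    ∃ C, 0 < C ∧ ∀ t, GZ t ≤ C * rexp (-(θ * |t|)) := by
  obtain ⟨C1, hC1⟩ := GZ_bound_one (θ := θ) (by linarith) h2
  obtain ⟨C2, hC2⟩ := GZ_bound_one (θ := -θ) (by linarith) (by linarith [Real.pi_pos])
  refine ⟨max (max C1 C2) 1, by positivity, fun t => ?_⟩
  rw [Real.exp_neg, ← div_eq_mul_inv, le_div_iff₀ (Real.exp_pos _), mul_comm]
  refine le_trans ?_ (le_max_left _ _)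
  rcases le_total 0 t with h | h
  · rw [abs_of_nonneg h]; exact (hC1 t).trans (le_max_left _ _)
  · rw [abs_of_nonpos h]; refine le_trans ?_ ((hC2 t).trans (le_max_right _ _))
    simp

lemma hl_continuous : Continuous hl := by unfold hl; fun_prop

lemma hl_ne_one (t : ℝ) : hl t ≠ 1 := by
  intro h; have := congrArg Complex.re h; rw [hl_re] at this; norm_num at this

lemma zeta_hl_continuous : Continuous (fun t => riemannZeta (hl t)) := by
  rw [continuous_iff_continuousAt]
  intro t
  exact ContinuousAt.comp (f := hl) (differentiableAt_riemannZeta (hl_ne_one t)).continuousAt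
    hl_continuous.continuousAt

lemma Gamma_hl_continuous : Continuous (fun t => Complex.Gamma (hl t)) := by
  rw [continuous_iff_continuousAt]
  intro t
  refine ContinuousAt.comp (f := hl) (Complex.differentiableAt_Gamma _ ?_).continuousAt
    hl_continuous.continuousAt
  intro m h
  have := congrArg Complex.re h
  rw [hl_re] at this
  simp at this
  have : (0:ℝ) ≤ m := m.cast_nonneg
  linarith

lemma mellin_hl_integrable {θ : ℝ} (h1 : 0 ≤ θ) (h2 : θ < π / 2) :
    Integrable (fun t => mellin (fun x : ℝ => ph (aa θ * x)) (hl t)) := by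
  have h1' : -(π/2) < θ := by linarith
  obtain ⟨C, hC, hb⟩ := GZ_bound (θ := (θ + π/2)/2) (by linarith) (by linarith)
  have hi := (integrable_exp_neg_abs (c := (π/2 - θ)/2) (by linarith)).const_mul C
  refine hi.mono' ?_ ?_
  · have : (fun t => mellin (fun x : ℝ => ph (aa θ * x)) (hl t)) =
      fun t => (aa θ) ^ (-(hl t)) * Complex.Gamma (hl t) * riemannZeta (hl t) := by
      ext t
      exact (ph_mellin_strip (aa_re_pos h1' h2) (by rw [hl_re]; norm_num)
        (by rw [hl_re]; norm_num)).2
    rw [this]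
    refine Continuous.aestronglyMeasurable ?_
    refine Continuous.mul (Continuous.mul ?_ Gamma_hl_continuous) zeta_hl_continuous
    exact (hl_continuous.neg).const_cpow (Or.inl (ne_zero_of_re (aa_re_pos h1' h2)))
  · refine Eventually.of_forall fun t => ?_
    rw [mellin_norm h1' h2]
    calc rexp (θ * t) * GZ t ≤ rexp (θ * |t|) * (C * rexp (-((θ + π/2)/2 * |t|))) := by
          refine mul_le_mul ?_ (hb t) (norm_nonneg _) (Real.exp_pos _).le
          exact Real.exp_le_exp.2 (mul_le_mul_of_nonneg_left (le_abs_self t) h1)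
      _ = C * rexp (-((π/2 - θ)/2) * |t|) := by
          rw [mul_left_comm, ← Real.exp_add]; ring_nf

lemma plancherel_ph {θ : ℝ} (h1 : 0 ≤ θ) (h2 : θ < π / 2) :
    ∫ t, (rexp (θ * t) * GZ t) ^ 2 = 2 * π * ∫ x in Ioi (0:ℝ), ‖ph (aa θ * x)‖ ^ 2 := by
  have h1' : -(π/2) < θ := by linarith
  have ha := aa_re_pos h1' h2
  set g : ℝ → ℂ := fun u => rexp (-(1/2) * u) • ph (aa θ * (rexp (-u) : ℝ)) with hgdef
  have hF : ∀ ξ, 𝓕 g ξ = mellin (fun x : ℝ => ph (aa θ * x)) (hl (2 * π * ξ)) := by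
    intro ξ
    rw [mellin_eq_fourier, hl_re, hl_im, mul_div_cancel_left₀ _ (by positivity)]
  have hc : Continuous g := by
    rw [hgdef, continuous_iff_continuousAt]
    intro u
    have hce : ContinuousAt (fun u : ℝ => rexp (-(1/2) * u)) u := by fun_prop
    refine hce.smul ?_
    exact ContinuousAt.comp (f := fun u : ℝ => rexp (-u)) (ph_continuous_ax ha (Real.exp_pos _))
      (Real.continuous_exp.comp continuous_neg).continuousAt
  have hg : Integrable g := by
    have h := (ph_mellin_strip (s := 1/2) ha (by norm_num) (by norm_num)).1
    refine (cv_integrable _ h).congr ?_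
    filter_upwards with u
    simp only [hgdef]
    rw [Complex.real_smul, Complex.real_smul, smul_eq_mul, ← mul_assoc]
    congr 1
    rw [← Complex.ofReal_one, ← Complex.ofReal_ofNat, ← Complex.ofReal_div,
      ← Complex.ofReal_sub, ← Complex.ofReal_cpow (Real.exp_pos _).le, ← Complex.ofReal_mul,
      ← Real.exp_mul, ← Real.exp_add]
    congr 2; ring
  have hFg : Integrable (𝓕 g) := by
    have := (mellin_hl_integrable h1 h2).comp_mul_left' (show (2 * π) ≠ 0 by positivity)
    refine this.congr ?_
    filter_upwards with ξ
    rw [hF]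
  have h := plancherel_cont hc hg hFg
  simp_rw [hF, mellin_norm h1' h2] at h
  rw [Measure.integral_comp_mul_left (fun t => (rexp (θ * t) * GZ t) ^ 2)] at h
  have e : ∫ x, ‖g x‖ ^ 2 = ∫ x in Ioi (0:ℝ), ‖ph (aa θ * x)‖ ^ 2 := by
    rw [cv_integral]
    congr 1
    ext u
    simp only [hgdef]
    rw [norm_smul, mul_pow, Real.norm_of_nonneg (Real.exp_pos _).le, ← Real.exp_nat_mul]
    congr 2
    push_cast; ring
  rw [← e, ← h, abs_of_pos (by positivity), smul_eq_mul]
  field_simp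

lemma Gamma_sq (t : ℝ) : ‖Complex.Gamma (hl t)‖ ^ 2 = π / Real.cosh (π * t) := by
  have h := Complex.Gamma_mul_Gamma_one_sub (hl t)
  have e : 1 - hl t = (starRingEnd ℂ) (hl t) := by
    apply Complex.ext
    · simp [hl]; norm_num
    · simp [hl]
  rw [e, Complex.Gamma_conj, Complex.mul_conj, Complex.normSq_eq_norm_sq] at h
  have e2 : Complex.sin (π * hl t) = (Real.cosh (π * t) : ℝ) := by
    rw [hl, mul_add, Complex.sin_add, ← mul_assoc, Complex.cos_mul_I]
    have : (π : ℂ) * (1/2) = ((π/2 : ℝ) : ℂ) := by push_cast; ring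
    rw [this, ← Complex.ofReal_sin, ← Complex.ofReal_cos]
    simp
  rw [e2] at h
  exact_mod_cast h

lemma Z2_eq (t : ℝ) : Z2 t = GZ t ^ 2 * (Real.cosh (π * t) / π) := by
  rw [GZ, norm_mul, mul_pow, Gamma_sq, Z2, hl]
  have : Real.cosh (π * t) ≠ 0 := (Real.cosh_pos _).ne'
  field_simp

lemma Z2_continuous : Continuous Z2 := by
  have : Z2 = fun t => ‖riemannZeta (hl t)‖ ^ 2 := rfl
  rw [this]; exact zeta_hl_continuous.norm.pow 2

lemma Z2_nonneg (t : ℝ) : 0 ≤ Z2 t := by unfold Z2; positivity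

lemma Z2_even (t : ℝ) : Z2 (-t) = Z2 t := by
  have h := riemannZeta_conj (hl t)
  have e : (starRingEnd ℂ) (hl t) = hl (-t) := by
    apply Complex.ext <;> simp [hl]
  rw [e] at h
  change ‖riemannZeta (hl (-t))‖ ^ 2 = ‖riemannZeta (hl t)‖ ^ 2
  rw [h]; simp

lemma Z2_bound {ε : ℝ} (hε : 0 < ε) : ∃ C, 0 < C ∧ ∀ t, Z2 t ≤ C * rexp (ε * |t|) := by
  obtain ⟨C, hC, hb⟩ := GZ_bound (θ := max 0 (π/2 - ε/2)) (le_max_left _ _)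
    (max_lt (by positivity) (by linarith))
  refine ⟨C ^ 2 / π, by positivity, fun t => ?_⟩
  rw [Z2_eq]
  have hθ : π / 2 - ε/2 ≤ max 0 (π/2 - ε/2) := le_max_right _ _
  set θ := max 0 (π/2 - ε/2)
  have h1 : GZ t ^ 2 ≤ (C * rexp (-(θ * |t|))) ^ 2 := pow_le_pow_left₀ (norm_nonneg _) (hb t) 2
  have h2 : Real.cosh (π * t) ≤ rexp (π * |t|) := by
    rw [← Real.cosh_abs, abs_mul, abs_of_pos Real.pi_pos, Real.cosh_eq]
    have : rexp (-(π * |t|)) ≤ rexp (π * |t|) := Real.exp_le_exp.2 (by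
      have : 0 ≤ π * |t| := by positivity
      linarith)
    linarith
  calc GZ t ^ 2 * (Real.cosh (π * t) / π) ≤ (C * rexp (-(θ * |t|))) ^ 2 * (rexp (π * |t|) / π) := by
        gcongr
    _ = C ^ 2 / π * rexp ((π - 2 * θ) * |t|) := by
        rw [mul_pow, ← Real.exp_nat_mul, mul_div_assoc', mul_assoc, ← Real.exp_add]
        rw [mul_div_right_comm]; push_cast; ring_nf
    _ ≤ C ^ 2 / π * rexp (ε * |t|) := by
        gcongr; linarith

lemma J_eq {δ : ℝ} (h0 : 0 < δ) (h1 : δ ≤ π / 2) :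
    ∫ t, Z2 t * (rexp (-2 * δ * t) / (1 + rexp (-2 * π * t))) =
      ∫ x in Ioi (0:ℝ), ‖ph (aa (π/2 - δ) * x)‖ ^ 2 := by
  have h := plancherel_ph (θ := π/2 - δ) (by linarith) (by linarith)
  have e : ∀ t, Z2 t * (rexp (-2 * δ * t) / (1 + rexp (-2 * π * t))) =
      (2 * π)⁻¹ * (rexp ((π/2 - δ) * t) * GZ t) ^ 2 := by
    intro t
    rw [Z2_eq, mul_pow, ← Real.exp_nat_mul, Real.cosh_eq]
    have e1 : rexp (((2:ℕ):ℝ) * ((π/2 - δ) * t)) = rexp (-2 * δ * t) * rexp (π * t) := by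
      rw [← Real.exp_add]; push_cast; ring_nf
    have e2 : rexp (-2 * π * t) = rexp (-(π * t)) * rexp (-(π * t)) := by
      rw [← Real.exp_add]; ring_nf
    have e3 : rexp (π * t) * rexp (-(π * t)) = 1 := by rw [← Real.exp_add]; simp
    rw [e1, e2]
    have hp : 0 < 1 + rexp (-(π * t)) * rexp (-(π * t)) := by positivity
    field_simp
    linear_combination (-(GZ t ^ 2 * rexp (-(π * t)))) * e3
  simp_rw [e]
  rw [integral_const_mul, h]
  field_simp

end TKA

open MeasureTheory Filter Real Set

namespace TKA
open scoped Topology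

lemma I_integrable {c : ℝ} (hc : 0 < c) :
    IntegrableOn (fun t => Z2 t * rexp (-c * t)) (Ioi 0) := by
  obtain ⟨C, hC, hb⟩ := Z2_bound (ε := c/2) (by linarith)
  have hi : IntegrableOn (fun t : ℝ => C * rexp (-(c/2) * t)) (Ioi 0) :=
    (integrableOn_exp_mul_Ioi (a := -(c/2)) (by linarith) 0).const_mul C
  refine Integrable.mono' hi ?_ ?_
  · exact (Z2_continuous.mul (by fun_prop)).aestronglyMeasurable
  · refine (ae_restrict_mem measurableSet_Ioi).mono fun t ht => ?_
    have ht' : 0 < t := ht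
    rw [Real.norm_of_nonneg (mul_nonneg (Z2_nonneg t) (Real.exp_pos _).le)]
    calc Z2 t * rexp (-c * t) ≤ C * rexp (c/2 * |t|) * rexp (-c * t) := by
          gcongr; exact hb t
      _ = C * rexp (-(c/2) * t) := by
          rw [abs_of_pos ht', mul_assoc, ← Real.exp_add]; ring_nf

lemma J_sub_I : ∃ C, 0 < C ∧ ∀ δ : ℝ, 0 < δ → δ ≤ 1 →
    |(∫ t, Z2 t * (rexp (-2 * δ * t) / (1 + rexp (-2 * π * t)))) -
      ∫ t in Ioi (0:ℝ), Z2 t * rexp (-(2 * δ) * t)| ≤ C * δ := by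
  obtain ⟨C, hC, hb⟩ := Z2_bound (ε := 1) one_pos
  refine ⟨2 * C, by positivity, fun δ h0 h1 => ?_⟩
  set F : ℝ → ℝ := fun t => Z2 t * (rexp (-2 * δ * t) / (1 + rexp (-2 * π * t))) with hF
  have hFc : Continuous F := by
    rw [hF]
    refine Z2_continuous.mul (Continuous.div (by fun_prop) (by fun_prop) fun t => ?_)
    positivity
  have hFn : ∀ t, 0 ≤ F t := fun t => mul_nonneg (Z2_nonneg t) (by positivity)
  have hI := I_integrable (c := 2 * δ) (by linarith)
  have hF1 : IntegrableOn F (Ioi 0) := by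
    refine Integrable.mono' hI hFc.aestronglyMeasurable (Eventually.of_forall fun t => ?_)
    rw [Real.norm_of_nonneg (hFn t)]
    refine mul_le_mul_of_nonneg_left ?_ (Z2_nonneg t)
    rw [← neg_mul]
    refine div_le_self (Real.exp_pos _).le ?_
    have := Real.exp_pos (-2 * π * t); linarith
  have hpi := Real.pi_gt_three
  have hF2 : IntegrableOn (fun t => F (-t)) (Ioi 0) := by
    have hI2 := I_integrable (c := 1) (by linarith)
    refine Integrable.mono' hI2 (hFc.comp continuous_neg).aestronglyMeasurable ?_
    refine (ae_restrict_mem measurableSet_Ioi).mono fun t ht => ?_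
    have ht' : 0 < t := ht
    rw [Real.norm_of_nonneg (hFn _)]
    simp only [hF, Z2_even]
    refine mul_le_mul_of_nonneg_left ?_ (Z2_nonneg t)
    rw [div_le_iff₀ (by positivity), mul_add, mul_one, ← Real.exp_add]
    have : rexp (-2 * δ * -t) ≤ rexp (-1 * t + -2 * π * -t) := by
      apply Real.exp_le_exp.2
      nlinarith
    have := Real.exp_pos (-1 * t)
    linarith
  have hF3 : IntegrableOn F (Iic 0) := by
    have := IntegrableOn.comp_neg ((integrableOn_Ici_iff_integrableOn_Ioi).2 hF2)
    simpa using this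
  have e1 : ∫ t, F t = (∫ t in Ioi (0:ℝ), F (-t)) + ∫ t in Ioi (0:ℝ), F t := by
    rw [integral_comp_neg_Ioi (0:ℝ) F, neg_zero, intervalIntegral.integral_Iic_add_Ioi hF3 hF1]
  have hpt : ∀ t, F (-t) + F t - Z2 t * rexp (-(2 * δ) * t) =
      Z2 t * ((rexp (2 * δ * t) - rexp (-(2 * δ * t))) / (1 + rexp (2 * π * t))) := by
    intro t
    simp only [hF, Z2_even]
    have a1 : rexp (-2 * π * t) = (rexp (2 * π * t))⁻¹ := by rw [← Real.exp_neg]; ring_nf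
    have a2 : rexp (-2 * π * -t) = rexp (2 * π * t) := by ring_nf
    have a3 : rexp (-2 * δ * -t) = rexp (2 * δ * t) := by ring_nf
    have a4 : rexp (-2 * δ * t) = rexp (-(2 * δ * t)) := by ring_nf
    have a5 : rexp (-(2 * δ) * t) = rexp (-(2 * δ * t)) := by ring_nf
    rw [a1, a2, a3, a4, a5]
    have : 0 < rexp (2 * π * t) := Real.exp_pos _
    have h1 : 1 + rexp (2 * π * t) ≠ 0 := by positivity
    have h2 : 1 + (rexp (2 * π * t))⁻¹ ≠ 0 := by positivity
    field_simp
    ring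
  have hF12 : IntegrableOn (fun t => F (-t) + F t) (Ioi 0) := hF2.add hF1
  rw [e1, ← integral_add hF2 hF1, ← integral_sub hF12 hI]
  simp_rw [hpt]
  have hi2 : IntegrableOn (fun t : ℝ => 4 * δ * C * rexp (-2 * t)) (Ioi 0) :=
    (integrableOn_exp_mul_Ioi (a := -2) (by norm_num) 0).const_mul _
  rw [← Real.norm_eq_abs]
  refine (norm_integral_le_of_norm_le hi2 ?_).trans (le_of_eq ?_)
  · refine (ae_restrict_mem measurableSet_Ioi).mono fun t ht => ?_
    have ht' : 0 < t := ht
    have hd : 0 ≤ rexp (2 * δ * t) - rexp (-(2 * δ * t)) := by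
      rw [sub_nonneg]; apply Real.exp_le_exp.2
      have : 0 ≤ 2 * δ * t := by positivity
      linarith
    rw [Real.norm_of_nonneg (mul_nonneg (Z2_nonneg t) (by positivity))]
    have hz := hb t
    rw [one_mul, abs_of_pos ht'] at hz
    have hd2 : rexp (2 * δ * t) - rexp (-(2 * δ * t)) ≤ 4 * δ * t * rexp (2 * δ * t) := by
      have : rexp (-(2 * δ * t)) = rexp (2 * δ * t) * rexp (-(4 * δ * t)) := by
        rw [← Real.exp_add]; ring_nf
      rw [this]
      have h3 := Real.add_one_le_exp (-(4 * δ * t))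
      nlinarith [Real.exp_pos (2 * δ * t)]
    have ht2 : t ≤ rexp t := by linarith [Real.add_one_le_exp t]
    calc Z2 t * ((rexp (2 * δ * t) - rexp (-(2 * δ * t))) / (1 + rexp (2 * π * t)))
        ≤ (C * rexp t) * ((4 * δ * rexp t * rexp (2 * t)) / rexp (6 * t)) := by
          refine mul_le_mul hz ?_ (by positivity) (by positivity)
          refine div_le_div₀ (by positivity) ?_ (Real.exp_pos _) ?_
          · refine hd2.trans ?_
            gcongr
            nlinarith
          · have : rexp (6 * t) ≤ rexp (2 * π * t) := by
              apply Real.exp_le_exp.2; nlinarith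
            linarith
      _ = 4 * δ * C * rexp (-2 * t) := by
          rw [div_eq_mul_inv, ← Real.exp_neg]
          have : rexp (-2 * t) = rexp t * (rexp t * rexp (2 * t) * rexp (-(6 * t))) := by
            rw [← Real.exp_add, ← Real.exp_add, ← Real.exp_add]; ring_nf
          rw [this]; ring
  · rw [integral_const_mul, integral_exp_mul_Ioi (by norm_num)]
    simp; ring

end TKA

open MeasureTheory Filter Real Set

namespace TKA
open scoped Topology

noncomputable def B0 (t : ℝ) : ℂ := ph t + 1 / 2
noncomputable def B1 (t : ℝ) : ℂ := deriv ph t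
noncomputable def B2 (t : ℝ) : ℂ := deriv (deriv ph) t

lemma strip_open : IsOpen {z : ℂ | |z.im| < 2 * π} :=
  isOpen_lt (continuous_abs.comp Complex.continuous_im) continuous_const

lemma ofReal_mem_strip (t : ℝ) : (t : ℂ) ∈ {z : ℂ | |z.im| < 2 * π} := by simp [Real.pi_pos]

lemma ph_diffOn_strip : DifferentiableOn ℂ ph {z : ℂ | |z.im| < 2 * π} :=
  fun _ hz => (ph_differentiableAt hz).differentiableWithinAt

lemma B0_deriv (t : ℝ) : HasDerivAt B0 (B1 t) t :=
  ((ph_differentiableAt (ofReal_mem_strip t)).hasDerivAt.comp_ofReal).add_const _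

lemma dph_diffOn : DifferentiableOn ℂ (deriv ph) {z : ℂ | |z.im| < 2 * π} :=
  ph_diffOn_strip.deriv strip_open

lemma B1_deriv (t : ℝ) : HasDerivAt B1 (B2 t) t :=
  ((dph_diffOn.differentiableAt (strip_open.mem_nhds (ofReal_mem_strip t))).hasDerivAt).comp_ofReal

lemma B2_continuous : Continuous B2 := by
  have h := (dph_diffOn.deriv strip_open).continuousOn
  exact h.comp_continuous Complex.continuous_ofReal ofReal_mem_strip

lemma B0_continuous : Continuous B0 :=
  continuous_iff_continuousAt.2 fun t => (B0_deriv t).continuousAt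
lemma B1_continuous : Continuous B1 :=
  continuous_iff_continuousAt.2 fun t => (B1_deriv t).continuousAt

lemma B0_zero : B0 0 = 0 := by simp [B0, ph_zero]; norm_num

lemma E_hasDerivAt {z : ℂ} (hz : 0 < z.re) : HasDerivAt E (-E z - E z ^ 2) z := by
  have h0 := exp_sub_one_ne hz
  have h := ((Complex.hasDerivAt_exp z).sub_const 1).inv h0
  convert! h using 1
  rw [E]; field_simp; ring

lemma re_pos_nhds {z : ℂ} (hz : 0 < z.re) : ∀ᶠ w in 𝓝 z, 0 < w.re :=
  (isOpen_lt continuous_const Complex.continuous_re).mem_nhds hz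

lemma dph_eq {z : ℂ} (hz : 0 < z.re) : deriv ph z = -E z - E z ^ 2 + 1 / z ^ 2 := by
  have hz0 := ne_zero_of_re hz
  have h : HasDerivAt (fun z => E z - z⁻¹) (-E z - E z ^ 2 - (-(z ^ 2)⁻¹)) z :=
    (E_hasDerivAt hz).sub (hasDerivAt_inv hz0)
  have h2 : ph =ᶠ[𝓝 z] (fun z => E z - z⁻¹) := by
    filter_upwards [re_pos_nhds hz] with w hw
    rw [ph_of_ne (ne_zero_of_re hw), one_div]
  rw [h2.deriv_eq, h.deriv]; simp

lemma ddph_eq {z : ℂ} (hz : 0 < z.re) :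
    deriv (deriv ph) z = E z + 3 * E z ^ 2 + 2 * E z ^ 3 - 2 / z ^ 3 := by
  have hz0 := ne_zero_of_re hz
  have hE := E_hasDerivAt hz
  have h : HasDerivAt (fun z => -E z - E z ^ 2 + (z ^ 2)⁻¹) _ z :=
    ((hE.neg).sub (hE.pow 2)).add ((hasDerivAt_pow 2 z).inv (pow_ne_zero 2 hz0))
  have h2 : deriv ph =ᶠ[𝓝 z] (fun z => -E z - E z ^ 2 + (z ^ 2)⁻¹) := by
    filter_upwards [re_pos_nhds hz] with w hw
    rw [dph_eq hw, one_div]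
  rw [h2.deriv_eq, h.deriv]
  simp
  field_simp
  ring

lemma B2_bound {t : ℝ} (ht : 1 ≤ t) : ‖B2 t‖ ≤ 14 * t ^ (-2 : ℝ) := by
  have ht0 : 0 < t := by linarith
  have hre : 0 < (t : ℂ).re := by simpa using ht0
  rw [B2, ddph_eq hre]
  have hE := norm_E_le hre
  rw [Complex.ofReal_re] at hE
  have hq := Real.quadratic_le_exp_of_nonneg ht0.le
  have h1 : ‖E t‖ ≤ 1 := hE.trans (inv_le_one_of_one_le₀ (by nlinarith))
  have h2 : ‖E t‖ ≤ 2 / t ^ 2 := by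
    refine hE.trans ?_
    rw [inv_le_comm₀ (by nlinarith) (by positivity), inv_div]; linarith
  rw [Real.rpow_neg ht0.le, Real.rpow_two]
  have h0 := norm_nonneg (E t)
  have h3 : ‖(2:ℂ) / t ^ 3‖ ≤ 2 / t ^ 2 := by
    rw [norm_div, norm_pow, Complex.norm_real, Real.norm_of_nonneg ht0.le]
    simp only [Complex.norm_ofNat]
    gcongr
    · norm_num
  have h4 : ‖E t‖ ^ 2 ≤ ‖E t‖ := by nlinarith
  have h5 : ‖E t‖ ^ 3 ≤ ‖E t‖ := by nlinarith
  calc ‖E t + 3 * E t ^ 2 + 2 * E t ^ 3 - 2 / (t:ℂ) ^ 3‖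
      ≤ ‖E t‖ + 3 * ‖E t‖ ^ 2 + 2 * ‖E t‖ ^ 3 + ‖(2:ℂ) / t ^ 3‖ := by
        refine (norm_sub_le _ _).trans ?_
        gcongr
        refine (norm_add_le _ _).trans ?_
        refine add_le_add ((norm_add_le _ _).trans ?_) ?_
        · simp
        · simp
    _ ≤ 14 * (t ^ 2)⁻¹ := by
        have e : 2 / t ^ 2 = 2 * (t ^ 2)⁻¹ := div_eq_mul_inv _ _
        linarith

lemma B2_integrable : IntegrableOn B2 (Ioi 0) := by
  rw [← Ioc_union_Ioi_eq_Ioi (zero_le_one (α := ℝ))]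
  refine IntegrableOn.union ?_ ?_
  · exact (B2_continuous.integrableOn_Icc (a := 0) (b := 1)).mono_set Ioc_subset_Icc_self
  · have := (integrableOn_Ioi_rpow_of_lt (a := -2) (by norm_num) (one_pos)).const_mul 14
    refine Integrable.mono' this B2_continuous.aestronglyMeasurable ?_
    exact (ae_restrict_mem measurableSet_Ioi).mono fun t ht => B2_bound (le_of_lt ht)

noncomputable def KB : ℝ := ‖B1 0‖ + ∫ t in Ioi (0:ℝ), ‖B2 t‖

lemma KB_nonneg : 0 ≤ KB := add_nonneg (norm_nonneg _) (integral_nonneg fun _ => norm_nonneg _)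

lemma B1_bound {t : ℝ} (ht : 0 ≤ t) : ‖B1 t‖ ≤ KB := by
  have h := intervalIntegral.integral_eq_sub_of_hasDerivAt (a := 0) (b := t)
    (fun x _ => B1_deriv x) (B2_continuous.intervalIntegrable _ _)
  have h2 : B1 t = B1 0 + ∫ x in (0:ℝ)..t, B2 x := by rw [h]; ring
  rw [h2, KB]
  refine (norm_add_le _ _).trans ?_
  gcongr
  rw [intervalIntegral.integral_of_le ht]
  refine (norm_integral_le_integral_norm _).trans ?_
  exact setIntegral_mono_set B2_integrable.norm (Eventually.of_forall fun _ => norm_nonneg _)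
    (Ioc_subset_Ioi_self.eventuallyLE)

lemma B0_bound {t : ℝ} (ht : 0 ≤ t) : ‖B0 t‖ ≤ KB * t := by
  have h := norm_image_sub_le_of_norm_deriv_le_segment' (f := B0) (f' := B1) (a := 0) (b := t)
    (C := KB) (fun x _ => (B0_deriv x).hasDerivWithinAt) (fun x hx => B1_bound hx.1) t ⟨ht, le_rfl⟩
  simpa [B0_zero] using h

lemma norm_cexp_neg (z : ℂ) (t : ℝ) : ‖Complex.exp (-(z * t))‖ = rexp (-z.re * t) := by
  rw [Complex.norm_exp]; simp

lemma t_exp_integrable {r : ℝ} (hr : 0 < r) :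
    IntegrableOn (fun t : ℝ => t * rexp (-r * t)) (Ioi 0) := by
  have h := integrableOn_rpow_mul_exp_neg_mul_rpow (p := 1) (s := 1) (b := r)
    (by norm_num) one_pos hr
  simpa using h

lemma B0_exp_integrable {z : ℂ} (hz : 0 < z.re) :
    IntegrableOn (fun t : ℝ => B0 t * Complex.exp (-(z * t))) (Ioi 0) := by
  refine Integrable.mono' ((t_exp_integrable hz).const_mul KB)
    (B0_continuous.mul (by fun_prop)).aestronglyMeasurable ?_
  refine (ae_restrict_mem measurableSet_Ioi).mono fun t ht => ?_
  rw [norm_mul, norm_cexp_neg, ← mul_assoc]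
  exact mul_le_mul_of_nonneg_right (B0_bound (le_of_lt ht)) (Real.exp_pos _).le

lemma B2_exp_integrable {z : ℂ} (hz : 0 < z.re) :
    IntegrableOn (fun t : ℝ => B2 t * Complex.exp (-(z * t))) (Ioi 0) := by
  refine Integrable.mono' B2_integrable.norm
    (B2_continuous.mul (by fun_prop)).aestronglyMeasurable ?_
  refine (ae_restrict_mem measurableSet_Ioi).mono fun t ht => ?_
  have ht' : 0 < t := ht
  rw [norm_mul, norm_cexp_neg]
  refine mul_le_of_le_one_right (norm_nonneg _) (Real.exp_le_one_iff.2 ?_)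
  nlinarith

lemma B0_laplace {z : ℂ} (hz : 0 < z.re) :
    ‖∫ t in Ioi (0:ℝ), B0 t * Complex.exp (-(z * t))‖ ≤ KB / ‖z‖ ^ 2 := by
  have hz0 := ne_zero_of_re hz
  have hlim : Tendsto (fun t : ℝ => -(B0 t / z + B1 t / z ^ 2) * Complex.exp (-(z * t))) atTop
      (𝓝 0) := by
    rw [tendsto_zero_iff_norm_tendsto_zero]
    have l1 := (tendsto_rpow_mul_exp_neg_mul_atTop_nhds_zero 1 z.re hz).const_mul (KB / ‖z‖)
    have l2 := (tendsto_rpow_mul_exp_neg_mul_atTop_nhds_zero 0 z.re hz).const_mul (KB / ‖z‖ ^ 2)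
    have l3 := l1.add l2
    simp only [Real.rpow_one, Real.rpow_zero, one_mul, mul_zero, add_zero] at l3
    refine tendsto_of_tendsto_of_tendsto_of_le_of_le' tendsto_const_nhds l3
      (Eventually.of_forall fun _ => norm_nonneg _) ?_
    filter_upwards [eventually_ge_atTop 0] with t ht
    rw [norm_mul, norm_cexp_neg, norm_neg]
    have e : KB / ‖z‖ * (t * rexp (-z.re * t)) + KB / ‖z‖ ^ 2 * rexp (-z.re * t) =
      (KB * t / ‖z‖ + KB / ‖z‖ ^ 2) * rexp (-z.re * t) := by ring
    rw [e]
    refine mul_le_mul_of_nonneg_right ?_ (Real.exp_pos _).le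
    refine (norm_add_le _ _).trans ?_
    rw [norm_div, norm_div, norm_pow]
    gcongr
    · exact B0_bound ht
    · exact B1_bound ht
  have hi : IntegrableOn (fun t : ℝ => B0 t * Complex.exp (-(z * t)) -
      1 / z ^ 2 * (B2 t * Complex.exp (-(z * t)))) (Ioi 0) :=
    (B0_exp_integrable hz).sub ((B2_exp_integrable hz).const_mul _)
  have hd : ∀ t ∈ Ici (0:ℝ), HasDerivAt
      (fun t : ℝ => -(B0 t / z + B1 t / z ^ 2) * Complex.exp (-(z * t)))
      (B0 t * Complex.exp (-(z * t)) - 1 / z ^ 2 * (B2 t * Complex.exp (-(z * t)))) t := by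
    intro t _
    have h1 : HasDerivAt (fun t : ℝ => Complex.exp (-(z * t))) (Complex.exp (-(z * t)) * (-(z * 1))) t :=
      (((hasDerivAt_id t).ofReal_comp).const_mul z).neg.cexp
    have h2 := ((((B0_deriv t).div_const z).add ((B1_deriv t).div_const (z ^ 2))).neg).mul h1
    convert! h2 using 1
    simp
    field_simp
    ring
  have h := integral_Ioi_of_hasDerivAt_of_tendsto' hd hi hlim
  rw [integral_sub (B0_exp_integrable hz) ((B2_exp_integrable hz).const_mul _),
    integral_const_mul] at h
  simp only [B0_zero] at h
  have h3 : ∫ t in Ioi (0:ℝ), B0 t * Complex.exp (-(z * t)) =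
      1 / z ^ 2 * (B1 0 + ∫ t in Ioi (0:ℝ), B2 t * Complex.exp (-(z * t))) := by
    simp at h
    linear_combination h
  rw [h3, norm_mul, norm_div, norm_pow, norm_one, one_div, mul_comm, div_eq_mul_inv]
  gcongr
  rw [KB]
  refine (norm_add_le _ _).trans ?_
  gcongr
  refine norm_integral_le_of_norm_le B2_integrable.norm ?_
  refine (ae_restrict_mem measurableSet_Ioi).mono fun t ht => ?_
  have ht' : 0 < t := ht
  rw [norm_mul, norm_cexp_neg]
  refine mul_le_of_le_one_right (norm_nonneg _) (Real.exp_le_one_iff.2 ?_)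
  nlinarith

lemma EB_integrable {a : ℂ} (ha : 0 < a.re) {b : ℝ} (hb : 0 < b) :
    IntegrableOn (fun x : ℝ => E (a * x) * B0 (b * x)) (Ioi 0) := by
  have hi : IntegrableOn (fun x : ℝ => KB * b / a.re * rexp (-(a.re / 2) * x)) (Ioi 0) :=
    (integrableOn_exp_mul_Ioi (by linarith : -(a.re/2) < 0) 0).const_mul _
  refine Integrable.mono' hi ?_ ?_
  · refine ContinuousOn.aestronglyMeasurable ?_ measurableSet_Ioi
    exact (continuousOn_Eax ha).mul (B0_continuous.comp (by fun_prop)).continuousOn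
  · refine (ae_restrict_mem measurableSet_Ioi).mono fun x hx => ?_
    have hx' : 0 < x := hx
    rw [norm_mul]
    have h1 := norm_E_le (re_mul_ofReal_pos ha hx')
    rw [Complex.re_mul_ofReal] at h1
    have h2 := B0_bound (t := b * x) (by positivity)
    set y := a.re * x with hy
    have hy0 : 0 < y := by positivity
    have h3 : y * rexp (y/2) ≤ rexp y - 1 := by
      have h4 := Real.self_le_sinh_iff.2 (show 0 ≤ y/2 by positivity)
      rw [Real.sinh_eq] at h4
      have e1 : rexp y = rexp (y/2) * rexp (y/2) := by rw [← Real.exp_add]; ring_nf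
      have e2 : rexp (-(y/2)) * rexp (y/2) = 1 := by rw [← Real.exp_add]; simp
      rw [e1]
      nlinarith [Real.exp_pos (y/2)]
    have h5 : (rexp y - 1)⁻¹ ≤ (y * rexp (y/2))⁻¹ := inv_anti₀ (by positivity) h3
    calc ‖E (a * x)‖ * ‖B0 (b * x)‖ ≤ (y * rexp (y/2))⁻¹ * (KB * (b * x)) :=
          mul_le_mul (h1.trans h5) h2 (norm_nonneg _) (by positivity)
      _ = KB * b / a.re * rexp (-(a.re / 2) * x) := by
          have : rexp (-(a.re/2) * x) = (rexp (y/2))⁻¹ := by rw [← Real.exp_neg, hy]; ring_nf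
          rw [this, hy]; field_simp

lemma EB_bound : ∃ C, 0 ≤ C ∧ ∀ (a : ℂ) (b : ℝ), 0 < a.re → ‖a‖ = 1 → 0 < b →
    ‖∫ x in Ioi (0:ℝ), E (a * x) * B0 (b * x)‖ ≤ C * b := by
  have hsum : Summable fun n : ℕ => 1 / (((n + 1 : ℕ) : ℝ)) ^ 2 :=
    (summable_nat_add_iff 1).2 (Real.summable_one_div_nat_pow.2 one_lt_two)
  refine ⟨KB * ∑' n : ℕ, 1 / (((n + 1 : ℕ) : ℝ)) ^ 2,
    mul_nonneg KB_nonneg (tsum_nonneg fun n => by positivity), fun a b ha hna hb => ?_⟩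
  have hre : ∀ n : ℕ, 0 < (((n + 1 : ℕ) : ℂ) * a / b).re := by
    intro n
    rw [Complex.div_ofReal_re, ← Complex.ofReal_natCast, Complex.re_ofReal_mul]; positivity
  have hfun : ∀ n : ℕ, (fun x : ℝ => Complex.exp (-(((n + 1 : ℕ) : ℂ) * (a * x))) * B0 (b * x)) =
      fun x => (fun t : ℝ => B0 t * Complex.exp (-((((n + 1 : ℕ) : ℂ) * a / b) * t))) (b * x) := by
    intro n; ext x
    have : (b:ℂ) ≠ 0 := by exact_mod_cast hb.ne'
    simp only
    rw [mul_comm]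
    congr 2
    push_cast; field_simp
  have hintg : ∀ n : ℕ, IntegrableOn
      (fun x : ℝ => Complex.exp (-(((n + 1 : ℕ) : ℂ) * (a * x))) * B0 (b * x)) (Ioi 0) := by
    intro n
    rw [hfun n]
    have := (integrableOn_Ioi_comp_mul_left_iff
      (fun t : ℝ => B0 t * Complex.exp (-((((n + 1 : ℕ) : ℂ) * a / b) * t))) 0 hb).2
    rw [mul_zero] at this
    exact this (B0_exp_integrable (hre n))
  have hkey := hasSum_integral_of_summable_integral_norm (μ := volume.restrict (Ioi (0:ℝ))) hintg ?_
  · have e1 : ∫ x in Ioi (0:ℝ), ∑' n : ℕ, Complex.exp (-(((n + 1 : ℕ) : ℂ) * (a * x))) * B0 (b * x)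
        = ∫ x in Ioi (0:ℝ), E (a * x) * B0 (b * x) := by
      refine setIntegral_congr_fun measurableSet_Ioi fun t ht => ?_
      exact ((hasSum_E (re_mul_ofReal_pos ha ht)).mul_right (B0 (b * t))).tsum_eq
    rw [e1] at hkey
    have hb2 : ∀ n : ℕ, ‖∫ x in Ioi (0:ℝ), Complex.exp (-(((n + 1 : ℕ) : ℂ) * (a * x))) * B0 (b * x)‖
        ≤ KB * b * (1 / (((n + 1 : ℕ) : ℝ)) ^ 2) := by
      intro n
      rw [hfun n, integral_comp_mul_left_Ioi (fun t : ℝ => B0 t *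
        Complex.exp (-((((n + 1 : ℕ) : ℂ) * a / b) * t))) 0 hb, mul_zero, norm_smul,
        Real.norm_of_nonneg (by positivity)]
      have h := B0_laplace (hre n)
      rw [norm_div, norm_mul, hna, Complex.norm_natCast, Complex.norm_real,
        Real.norm_of_nonneg hb.le] at h
      calc b⁻¹ * _ ≤ b⁻¹ * _ := mul_le_mul_of_nonneg_left h (by positivity)
        _ = _ := by field_simp
    rw [← hkey.tsum_eq]
    refine (tsum_of_norm_bounded ((hsum.mul_left (KB * b)).hasSum) hb2).trans (le_of_eq ?_)
    rw [tsum_mul_left]; ring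
  · refine Summable.of_nonneg_of_le (fun n => integral_nonneg fun _ => norm_nonneg _) ?_
      (hsum.mul_left (KB * b / a.re ^ 2))
    intro n
    have hn : (0:ℝ) < ((n + 1 : ℕ) : ℝ) := by positivity
    have hr : 0 < ((n + 1 : ℕ) : ℝ) * a.re := by positivity
    have hI := Real.integral_rpow_mul_exp_neg_mul_Ioi (a := 2) two_pos hr
    have hI2 : ∫ x in Ioi (0:ℝ), KB * b * (x * rexp (-(((n + 1 : ℕ) : ℝ) * a.re) * x)) =
        KB * b / a.re ^ 2 * (1 / (((n + 1 : ℕ) : ℝ)) ^ 2) := by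
      rw [integral_const_mul]
      have e : ∫ x in Ioi (0:ℝ), (x * rexp (-(((n + 1 : ℕ) : ℝ) * a.re) * x)) =
        ∫ t in Ioi (0:ℝ), t ^ (2 - 1 : ℝ) * rexp (-(((n + 1 : ℕ) : ℝ) * a.re * t)) := by
        congr 1; ext t; norm_num
      rw [e, hI, Real.Gamma_two]
      have : ((1:ℝ) / (((n + 1 : ℕ) : ℝ) * a.re)) ^ (2:ℝ) = (1 / (((n + 1 : ℕ) : ℝ) * a.re)) ^ 2 := by
        exact_mod_cast Real.rpow_natCast _ 2
      rw [this]; field_simp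
    rw [← hI2]
    refine setIntegral_mono_on (hintg n).norm ((t_exp_integrable hr).const_mul _) measurableSet_Ioi ?_
    intro x hx
    have hx' : 0 < x := hx
    rw [norm_mul, ← mul_assoc, norm_cexp_neg, ← Complex.ofReal_natCast, Complex.re_ofReal_mul]
    have h2 := B0_bound (t := b * x) (by positivity)
    calc rexp (-(((n + 1 : ℕ) : ℝ) * a.re) * x) * ‖B0 (b * x)‖
        ≤ rexp (-(((n + 1 : ℕ) : ℝ) * a.re) * x) * (KB * (b * x)) := by gcongr
      _ = _ := by ring

end TKA

open MeasureTheory Filter Real Set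

namespace TKA
open scoped Topology

lemma E_conj (z : ℂ) : (starRingEnd ℂ) (E z) = E ((starRingEnd ℂ) z) := by
  rw [E, E, map_inv₀, map_sub, map_one, Complex.exp_conj]

lemma E_mul_E {z w : ℂ} (hz : 0 < z.re) (hw : 0 < w.re) :
    E z * E w = E (z + w) * (1 + E z + E w) := by
  have h1 := exp_sub_one_ne hz
  have h2 := exp_sub_one_ne hw
  have h3 : Complex.exp (z + w) - 1 ≠ 0 := exp_sub_one_ne (by simp; linarith)
  rw [E, E, E]
  rw [Complex.exp_add] at h3 ⊢
  field_simp
  ring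

/-- complexified integrand -/
noncomputable def GG (a : ℂ) (x : ℝ) : ℂ :=
  2 * (E (a * x) * B0 (2 * a.re * x)) + f2 ((2 * a.re : ℝ) : ℂ) x - f2 a x
    - (a ^ 2 * ((1 / a.re : ℝ) : ℂ)) * ((x:ℂ) ^ ((0:ℂ) - 1) • f2 a x)
    + (x:ℂ) ^ ((0:ℂ) - 1) • (Ioi (1:ℝ)).indicator (fun t : ℝ => (t:ℂ)⁻¹) x

lemma GG_re {a : ℂ} (ha : 0 < a.re) (hna : ‖a‖ = 1) {x : ℝ} (hx : 0 < x) :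
    ‖ph (a * x)‖ ^ 2 = (GG a x).re := by
  have key : ((2 * ‖ph (a * x)‖ ^ 2 : ℝ) : ℂ) = ((2 * (GG a x).re : ℝ) : ℂ) := by
    rw [← Complex.add_conj]
    have e1 : ((2 * ‖ph (a * x)‖ ^ 2 : ℝ) : ℂ) = 2 * (ph (a * x) * (starRingEnd ℂ) (ph (a * x))) := by
      rw [Complex.mul_conj, Complex.normSq_eq_norm_sq]; push_cast; ring
    rw [e1]
    have ha0 := ne_zero_of_re ha
    have hz := re_mul_ofReal_pos ha hx
    obtain ⟨c, hc⟩ : ∃ c, c = (starRingEnd ℂ) a := ⟨_, rfl⟩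
    have hcre : 0 < c.re := by rw [hc]; simpa using ha
    have hw := re_mul_ofReal_pos hcre hx
    have hac : a * c = 1 := by rw [hc, Complex.mul_conj, Complex.normSq_eq_norm_sq, hna]; simp
    have hab : ((2 * a.re : ℝ) : ℂ) = a + c := by rw [hc, Complex.add_conj]
    have hb : (0:ℝ) < 2 * a.re := by linarith
    have hb0 : ((2 * a.re : ℝ) : ℂ) ≠ 0 := by exact_mod_cast hb.ne'
    have hx0 : (x:ℂ) ≠ 0 := by exact_mod_cast hx.ne'
    have hE := E_mul_E hz hw
    rw [← add_mul, ← hab] at hE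
    have hcon : (starRingEnd ℂ) (a * x) = c * x := by simp [hc]
    obtain ⟨v, hv'⟩ : ∃ v, v = ((2 * a.re : ℝ) : ℂ)⁻¹ := ⟨_, rfl⟩
    obtain ⟨u, hu⟩ : ∃ u, u = (x:ℂ)⁻¹ := ⟨_, rfl⟩
    have hv : v * (a + c) = 1 := by rw [hv', ← hab, inv_mul_cancel₀ hb0]
    have ha1 : a⁻¹ = c := inv_eq_of_mul_eq_one_right hac
    have hk : ((1 / a.re : ℝ) : ℂ) = 2 * v := by
      rw [hv']; push_cast; field_simp
    have hph : ph (a * x) = E (a * x) - c * u := by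
      rw [ph_of_ne (ne_zero_of_re hz), one_div, mul_inv, ha1, hu]
    have hB : B0 (2 * a.re * x) = E (((2 * a.re : ℝ) : ℂ) * x) - v * u + 1 / 2 := by
      rw [B0]
      have e : ((2 * a.re * x : ℝ) : ℂ) = ((2 * a.re : ℝ) : ℂ) * x := by push_cast; ring
      rw [e, ph_of_ne (mul_ne_zero hb0 hx0), one_div, mul_inv, hv', hu]
    have hEw : (starRingEnd ℂ) (E (a * x)) = E (c * x) := by rw [E_conj, hcon]
    have hEb : (starRingEnd ℂ) (E (((2 * a.re : ℝ) : ℂ) * x)) = E (((2 * a.re : ℝ) : ℂ) * x) := by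
      rw [E_conj, map_mul, Complex.conj_ofReal, Complex.conj_ofReal]
    have hcu : (starRingEnd ℂ) u = u := by rw [hu, map_inv₀, Complex.conj_ofReal]
    have hcv : (starRingEnd ℂ) v = v := by rw [hv', map_inv₀, Complex.conj_ofReal]
    have hca : (starRingEnd ℂ) a = c := hc.symm
    have hcc : (starRingEnd ℂ) c = a := by rw [hc, Complex.conj_conj]
    have h2 : (starRingEnd ℂ) (2:ℂ) = 2 := Complex.conj_ofNat 2
    have hpow : (x:ℂ) ^ ((0:ℂ) - 1) = u := by rw [zero_sub, Complex.cpow_neg_one, hu]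
    rw [GG, hpow, hk, hph, hB, f2, f2]
    by_cases hx1 : x ≤ 1
    · have hm : x ∈ Ioc (0:ℝ) 1 := ⟨hx, hx1⟩
      rw [indicator_of_mem hm, indicator_of_mem hm, indicator_of_notMem (by simpa using hx1)]
      simp only [one_div, mul_inv, ← hv', ← hu, ha1, smul_eq_mul]
      generalize E (((2 * a.re : ℝ) : ℂ) * x) = eb at *
      simp only [map_add, map_sub, map_mul, map_pow, map_inv₀, map_zero, hEw, hEb, hcu,
        hcv, hca, hcc, h2]
      generalize E (a * x) = e at *
      generalize E (c * x) = e' at *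
      linear_combination 2 * hE + (2 * a * e * u + 2 * c * e' * u - 2 * a * c * u ^ 2 +
        (a + c) * u) * hv + (-2 * v * e * u - 2 * v * e' * u - 2 * v * u) * hac
    · have hm : x ∉ Ioc (0:ℝ) 1 := fun h => hx1 h.2
      rw [indicator_of_notMem hm, indicator_of_notMem hm, indicator_of_mem (by simpa using hx1)]
      simp only [one_div, ← hu, smul_eq_mul]
      generalize E (((2 * a.re : ℝ) : ℂ) * x) = eb at *
      simp only [map_add, map_sub, map_mul, map_pow, map_inv₀, map_zero, hEw, hEb, hcu,
        hcv, hca, hcc, h2]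
      generalize E (a * x) = e at *
      generalize E (c * x) = e' at *
      linear_combination 2 * hE + (2 * a * e * u + 2 * c * e' * u) * hv +
        (-2 * v * e * u - 2 * v * e' * u + 2 * u ^ 2) * hac
  have := Complex.ofReal_injective key
  linarith

lemma f2_int {a : ℂ} (ha : 0 < a.re) :
    IntegrableOn (f2 a) (Ioi 0) ∧ ∫ x in Ioi (0:ℝ), f2 a x = -Complex.log a / a + 1 / 2 := by
  have h1 := f2_mellinConv ha (s := 1) (by simp)
  have h2 := mellin_f2_one ha
  rw [MellinConvergent] at h1
  rw [mellin] at h2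
  simp only [sub_self, Complex.cpow_zero, one_smul] at h1 h2
  exact ⟨h1, h2⟩

lemma GG_int {a : ℂ} (ha : 0 < a.re) :
    IntegrableOn (GG a) (Ioi 0) ∧ ∫ x in Ioi (0:ℝ), GG a x =
      2 * (∫ x in Ioi (0:ℝ), E (a * x) * B0 (2 * a.re * x))
      + (-Complex.log ((2 * a.re : ℝ) : ℂ) / ((2 * a.re : ℝ) : ℂ) + 1 / 2)
      - (-Complex.log a / a + 1 / 2)
      - (a ^ 2 * ((1 / a.re : ℝ) : ℂ)) * (Complex.log a / 2 + Real.eulerMascheroniConstant / 2 -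
        Complex.log (2 * π) / 2 + 1 / a) + 1 := by
  have hb : (0:ℝ) < 2 * a.re := by linarith
  have i1 := (EB_integrable ha hb).const_mul 2
  have i2 := f2_int (a := ((2 * a.re : ℝ) : ℂ)) (by rwa [Complex.ofReal_re])
  have i3 := f2_int ha
  have i4 : IntegrableOn (fun x : ℝ => (x:ℂ) ^ ((0:ℂ) - 1) • f2 a x) (Ioi 0) :=
    f2_mellinConv ha (s := 0) (by simp)
  have v4 : ∫ x in Ioi (0:ℝ), (x:ℂ) ^ ((0:ℂ) - 1) • f2 a x = _ := mellin_f2_zero ha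
  have h5 := hasMellin_neg_one_Ioi (s := 0) (by simp)
  have i5 : IntegrableOn (fun x : ℝ => (x:ℂ) ^ ((0:ℂ) - 1) •
    (Ioi (1:ℝ)).indicator (fun t : ℝ => (t:ℂ)⁻¹) x) (Ioi 0) := h5.1
  have v5 : ∫ x in Ioi (0:ℝ), (x:ℂ) ^ ((0:ℂ) - 1) •
    (Ioi (1:ℝ)).indicator (fun t : ℝ => (t:ℂ)⁻¹) x = 1 := by
    have := h5.2
    rw [mellin] at this
    rw [this]; norm_num
  have i4' := i4.const_mul (a ^ 2 * ((1 / a.re : ℝ) : ℂ))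
  have j1 := i1.add i2.1
  have j2 := j1.sub i3.1
  have j3 := j2.sub i4'
  have j4 := j3.add i5
  refine ⟨j4, ?_⟩
  have t4 := integral_add j3 i5
  have t3 := integral_sub j2 i4'
  have t2 := integral_sub j1 i3.1
  have t1 := integral_add i1 i2.1
  simp only [Pi.add_apply, Pi.sub_apply] at t1 t2 t3 t4
  unfold GG
  rw [t4, t3, t2, t1, integral_const_mul, integral_const_mul, i2.2, i3.2, v4, v5]

lemma J_eval {θ : ℝ} (h1 : -(π/2) < θ) (h2 : θ < π / 2) :
    ∫ x in Ioi (0:ℝ), ‖ph (aa θ * x)‖ ^ 2 =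
      2 * (∫ x in Ioi (0:ℝ), E (aa θ * x) * B0 (2 * Real.cos θ * x)).re
      - Real.log (2 * Real.cos θ) / (2 * Real.cos θ) + 2 * θ * Real.sin θ
      + (Real.eulerMascheroniConstant - Real.log (2 * π)) * (1 - 2 * Real.cos θ ^ 2) /
        (2 * Real.cos θ) := by
  have ha := aa_re_pos h1 h2
  have hG := GG_int ha
  have e1 : ∫ x in Ioi (0:ℝ), ‖ph (aa θ * x)‖ ^ 2 = ∫ x in Ioi (0:ℝ), (GG (aa θ) x).re :=
    setIntegral_congr_fun measurableSet_Ioi fun x hx => GG_re ha (aa_norm θ) hx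
  have e2 : ∫ x in Ioi (0:ℝ), (GG (aa θ) x).re = (∫ x in Ioi (0:ℝ), GG (aa θ) x).re := by
    have := integral_re hG.1
    simpa using this
  rw [e1, e2, hG.2, aa_log h1 h2, aa_re]
  rw [aa_re] at ha
  have hinv : (aa θ)⁻¹ = Real.cos θ - Real.sin θ * Complex.I := by
    rw [aa, ← Complex.exp_neg, ← neg_mul, ← Complex.ofReal_neg, Complex.exp_mul_I,
      ← Complex.ofReal_cos, ← Complex.ofReal_sin]
    simp; ring
  have haa : aa θ = Real.cos θ + Real.sin θ * Complex.I := by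
    rw [aa, Complex.exp_mul_I, ← Complex.ofReal_cos, ← Complex.ofReal_sin]
  have hl2 : Complex.log (2 * π) = (Real.log (2 * π) : ℝ) := by
    rw [Complex.ofReal_log (by positivity)]; simp
  have hl1 : Complex.log ((2 * Real.cos θ : ℝ) : ℂ) = (Real.log (2 * Real.cos θ) : ℝ) := by
    rw [Complex.ofReal_log (by positivity)]
  have hdiv : ∀ r s : ℝ, -(r : ℂ) / (s : ℂ) = ((-r / s : ℝ) : ℂ) := by intro r s; push_cast; ring
  have hM : ∀ w : ℂ, w / 2 = w * ((1/2 : ℝ) : ℂ) := by intro w; push_cast; ring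
  have h12 : (1 / 2 : ℂ) = ((1/2 : ℝ) : ℂ) := by push_cast; ring
  rw [hl2, hl1, hdiv, one_div (aa θ), div_eq_mul_inv _ (aa θ), hinv]
  simp only [hM]
  generalize (∫ x in Ioi (0:ℝ), E (aa θ * x) * B0 (2 * Real.cos θ * x)) = M
  rw [haa]
  have hcs := Real.sin_sq_add_cos_sq θ
  generalize Real.cos θ = C at *
  generalize Real.sin θ = S at *
  have hS : S ^ 2 = 1 - C ^ 2 := by linarith
  have hR : Real.log (2 * C) / (2 * C) = -(-Real.log (2 * C) / (2 * C)) := by ring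
  rw [hR]
  generalize -Real.log (2 * C) / (2 * C) = L
  simp [pow_two, -one_div]
  have hSS : S * S = 1 - C * C := by linarith
  rw [hSS]
  have hC : C ≠ 0 := ha.ne'
  field_simp
  linear_combination (-4) * C * hcs

end TKA

open MeasureTheory Filter Real Set

namespace TKA
open scoped Topology

lemma one_le_log_inv {δ : ℝ} (h0 : 0 < δ) (h1 : δ ≤ 1 / 10) : 1 ≤ Real.log (1 / δ) := by
  rw [Real.le_log_iff_exp_le (by positivity)]
  have : (10:ℝ) ≤ 1 / δ := by
    rw [le_div_iff₀ h0]; linarith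
  have := Real.exp_one_lt_d9
  linarith

lemma elem_main {A δ : ℝ} (h0 : 0 < δ) (h1 : δ ≤ 1 / 10) :
    |(A - Real.log (Real.sin δ)) / (2 * Real.sin δ) - (Real.log (1 / δ) + A) / (2 * δ)| ≤
      (|A| + 2) * (δ * Real.log (1 / δ)) := by
  have hL := one_le_log_inv h0 h1
  have hlog : Real.log (1 / δ) = -Real.log δ := by rw [one_div, Real.log_inv]
  have hs1 : Real.sin δ < δ := Real.sin_lt h0
  have hs2 := Real.sin_gt_sub_cube h0
  generalize Real.sin δ = s at *
  generalize Real.log (1 / δ) = L at *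
  have hd2 : δ ^ 2 ≤ 1 / 100 := by nlinarith
  have hd3 : δ ^ 3 ≤ δ / 100 := by nlinarith
  have hsl : δ / 2 ≤ s := by linarith
  have hs0 : 0 < s := by linarith
  have hlogδ : Real.log δ = -L := by linarith
  have hu1 : Real.log s ≤ Real.log δ := Real.log_le_log hs0 hs1.le
  have hu2 : Real.log δ - Real.log s ≤ δ / s - 1 := by
    rw [← Real.log_div h0.ne' hs0.ne']
    exact Real.log_le_sub_one_of_pos (by positivity)
  have hu3 : δ / s - 1 ≤ δ ^ 2 / 2 := by
    rw [sub_le_iff_le_add, div_le_iff₀ hs0]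
    nlinarith [mul_le_mul_of_nonneg_left hsl (sq_nonneg δ)]
  have hd : 1 / (2 * s) - 1 / (2 * δ) ≤ δ / 4 := by
    have e : 1 / (2 * s) - 1 / (2 * δ) = (δ - s) / (2 * s * δ) := by field_simp
    rw [e, div_le_iff₀ (by positivity)]
    nlinarith [mul_le_mul_of_nonneg_left hsl (sq_nonneg δ)]
  have hdn : 0 ≤ 1 / (2 * s) - 1 / (2 * δ) := by
    rw [sub_nonneg]
    exact one_div_le_one_div_of_le (by positivity) (by linarith)
  have h2s : 1 / (2 * s) ≤ 1 / δ := one_div_le_one_div_of_le h0 (by linarith)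
  have eq : (A - Real.log s) / (2 * s) - (L + A) / (2 * δ) =
      (A + L) * (1 / (2 * s) - 1 / (2 * δ)) + (Real.log δ - Real.log s) * (1 / (2 * s)) := by
    rw [hlogδ]; field_simp; ring
  rw [eq]
  have b1 : |(A + L) * (1 / (2 * s) - 1 / (2 * δ))| ≤ (|A| + L) * (δ / 4) := by
    rw [abs_mul, abs_of_nonneg hdn]
    have : |A + L| ≤ |A| + L := by
      calc |A + L| ≤ |A| + |L| := abs_add_le _ _
        _ = _ := by rw [abs_of_nonneg (by linarith : 0 ≤ L)]
    exact mul_le_mul this hd hdn ((abs_nonneg _).trans this)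
  have b2 : |(Real.log δ - Real.log s) * (1 / (2 * s))| ≤ δ / 2 := by
    rw [abs_mul, abs_of_nonneg (by linarith : 0 ≤ Real.log δ - Real.log s),
      abs_of_nonneg (by positivity : 0 ≤ 1 / (2 * s))]
    calc _ ≤ (δ ^ 2 / 2) * (1 / δ) := by
            apply mul_le_mul (by linarith) h2s (by positivity) (by positivity)
      _ = δ / 2 := by field_simp
  have hA := abs_nonneg A
  have hAd : |A| * δ ≤ |A| * (δ * L) := by
    apply mul_le_mul_of_nonneg_left _ hA; nlinarith
  have hdL : δ ≤ δ * L := by nlinarith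
  have hAd0 : 0 ≤ |A| * δ := by positivity
  calc _ ≤ _ := abs_add_le _ _
    _ ≤ (|A| + L) * (δ / 4) + δ / 2 := add_le_add b1 b2
    _ ≤ _ := by nlinarith

lemma I_asymp : ∃ K, 0 < K ∧ ∀ δ : ℝ, 0 < δ → δ ≤ 1 / 10 →
    |(∫ t in Ioi (0:ℝ), Z2 t * rexp (-(2 * δ) * t)) -
      (Real.log (1 / δ) + (Real.eulerMascheroniConstant - Real.log (4 * π))) / (2 * δ) - π| ≤
      K * (δ * Real.log (1 / δ)) := by
  obtain ⟨C1, hC1, H1⟩ := J_sub_I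
  obtain ⟨C2, hC2, H2⟩ := EB_bound
  set A := Real.eulerMascheroniConstant - Real.log (4 * π) with hA
  set B := Real.eulerMascheroniConstant - Real.log (2 * π) with hB
  refine ⟨C1 + 4 * C2 + (|A| + 2) + 4 + |B|, by positivity, fun δ h0 h1 => ?_⟩
  have hpi := Real.pi_gt_three
  have hpi4 := Real.pi_le_four
  have hL := one_le_log_inv h0 h1
  have k1 := H1 δ h0 (by linarith)
  rw [J_eq h0 (by linarith), J_eval (by linarith) (by linarith), Real.cos_pi_div_two_sub,
    Real.sin_pi_div_two_sub] at k1
  have hs1 : Real.sin δ < δ := Real.sin_lt h0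
  have hs0 : 0 < Real.sin δ := Real.sin_pos_of_pos_of_lt_pi h0 (by linarith)
  have k2 := H2 (aa (π / 2 - δ)) (2 * Real.sin δ) (aa_re_pos (by linarith) (by linarith))
    (aa_norm _) (by positivity)
  have k3 := elem_main (A := A) h0 h1
  have k2' := (Complex.abs_re_le_norm _).trans k2
  generalize (∫ x in Ioi (0:ℝ), E (aa (π / 2 - δ) * x) * B0 (2 * Real.sin δ * x)) = M at *
  generalize (∫ t in Ioi (0:ℝ), Z2 t * rexp (-(2 * δ) * t)) = I at *
  have e : -Real.log (2 * Real.sin δ) / (2 * Real.sin δ) + B * (1 - 2 * Real.sin δ ^ 2) /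
      (2 * Real.sin δ) = (A - Real.log (Real.sin δ)) / (2 * Real.sin δ) - B * Real.sin δ := by
    have : A = B - Real.log 2 := by
      rw [hA, hB, show 4 * π = 2 * (2 * π) by ring, Real.log_mul (x := 2) (by norm_num) (by positivity)]
      ring
    rw [this, Real.log_mul (by norm_num) hs0.ne']
    field_simp
    ring
  have k4 : |2 * (π / 2 - δ) * Real.cos δ - π| ≤ 4 * δ := by
    have c1 := Real.one_sub_sq_div_two_le_cos (x := δ)
    have c2 := Real.cos_le_one δ
    rw [abs_le]
    constructor <;> nlinarith
  have k5 : |B * Real.sin δ| ≤ |B| * δ := by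
    rw [abs_mul, abs_of_pos hs0]; gcongr
  have k6 : |2 * M.re| ≤ 4 * C2 * δ := by
    rw [abs_mul, abs_two]; nlinarith
  have hdL : δ ≤ δ * Real.log (1 / δ) := by nlinarith
  generalize Real.log (1 / δ) = L at *
  have eq : I - (L + A) / (2 * δ) - π =
      -((2 * M.re - Real.log (2 * Real.sin δ) / (2 * Real.sin δ) + 2 * (π / 2 - δ) * Real.cos δ
        + B * (1 - 2 * Real.sin δ ^ 2) / (2 * Real.sin δ)) - I) + 2 * M.re +
      ((A - Real.log (Real.sin δ)) / (2 * Real.sin δ) - (L + A) / (2 * δ)) +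
      (2 * (π / 2 - δ) * Real.cos δ - π) - B * Real.sin δ := by
    linear_combination e
  rw [eq]
  have step : ∀ a b c d f : ℝ, |-a + b + c + d - f| ≤ |a| + |b| + |c| + |d| + |f| := by
    intro a b c d f
    calc _ ≤ |-a + b + c + d| + |f| := abs_sub _ _
      _ ≤ |-a + b + c| + |d| + |f| := by gcongr; exact abs_add_le _ _
      _ ≤ |-a + b| + |c| + |d| + |f| := by gcongr; exact abs_add_le _ _
      _ ≤ |-a| + |b| + |c| + |d| + |f| := by gcongr; exact abs_add_le _ _
      _ = _ := by rw [abs_neg]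
  refine (step _ _ _ _ _).trans ?_
  calc _ ≤ C1 * δ + 4 * C2 * δ + (|A| + 2) * (δ * L) + 4 * δ + |B| * δ := by gcongr
    _ ≤ C1 * (δ * L) + 4 * C2 * (δ * L) + (|A| + 2) * (δ * L) + 4 * (δ * L) + |B| * (δ * L) := by
      gcongr
    _ = _ := by ring

lemma tail_bound : ∃ K, 0 < K ∧ ∀ δ m : ℝ, 0 < δ → δ ≤ 1 / 10 →
    7 * (1 / δ) * Real.log (1 / δ) ≤ m →
    |∫ t in Ioi m, Z2 t * rexp (-(2 * δ) * t)| ≤ K * δ := by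
  obtain ⟨K, hK, H⟩ := I_asymp
  set A := Real.eulerMascheroniConstant - Real.log (4 * π) with hA
  refine ⟨6 + |A| + K, by positivity, fun δ m h0 h1 hm => ?_⟩
  have hL := one_le_log_inv h0 h1
  have hm0 : 0 ≤ m := le_trans (by positivity) hm
  have h := H (δ / 2) (by linarith) (by linarith)
  have e2 : 2 * (δ / 2) = δ := by ring
  rw [e2] at h
  have i1 := I_integrable h0
  have hsub : Ioi m ⊆ Ioi (0:ℝ) := Ioi_subset_Ioi hm0
  have hexp : rexp (-δ * m) ≤ δ ^ 7 := by
    have : δ ^ 7 = rexp (7 * Real.log δ) := by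
      rw [mul_comm, Real.exp_mul, Real.exp_log h0]; norm_cast
    rw [this]
    apply Real.exp_le_exp.2
    rw [one_div, Real.log_inv] at hm
    have : δ * (7 * δ⁻¹ * -Real.log δ) ≤ δ * m := mul_le_mul_of_nonneg_left hm h0.le
    have e : δ * (7 * δ⁻¹ * -Real.log δ) = -(7 * Real.log δ) := by field_simp
    linarith
  have hI0 : 0 ≤ ∫ t in Ioi (0:ℝ), Z2 t * rexp (-δ * t) :=
    setIntegral_nonneg measurableSet_Ioi fun t _ => mul_nonneg (Z2_nonneg t) (Real.exp_pos _).le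
  have b1 : |∫ t in Ioi m, Z2 t * rexp (-(2 * δ) * t)| ≤
      rexp (-δ * m) * ∫ t in Ioi (0:ℝ), Z2 t * rexp (-δ * t) := by
    rw [abs_of_nonneg (setIntegral_nonneg measurableSet_Ioi fun t _ =>
      mul_nonneg (Z2_nonneg t) (Real.exp_pos _).le)]
    calc _ ≤ ∫ t in Ioi m, rexp (-δ * m) * (Z2 t * rexp (-δ * t)) := by
          apply setIntegral_mono_on
          · exact (I_integrable (by positivity : 0 < 2 * δ)).mono_set hsub
          · exact (i1.mono_set hsub).const_mul _
          · exact measurableSet_Ioi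
          · intro t ht
            have : rexp (-(2 * δ) * t) = rexp (-δ * t) * rexp (-δ * t) := by
              rw [← Real.exp_add]; ring_nf
            rw [this]
            have h3 : rexp (-δ * t) ≤ rexp (-δ * m) := by
              apply Real.exp_le_exp.2
              have : m < t := ht
              nlinarith
            have h4 := mul_le_mul_of_nonneg_right h3
              (mul_nonneg (Z2_nonneg t) (Real.exp_pos (-δ * t)).le)
            linarith
      _ = rexp (-δ * m) * ∫ t in Ioi m, Z2 t * rexp (-δ * t) := integral_const_mul _ _
      _ ≤ _ := by
          apply mul_le_mul_of_nonneg_left _ (Real.exp_pos _).le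
          apply setIntegral_mono_set i1
          · exact Eventually.of_forall fun t => mul_nonneg (Z2_nonneg t) (Real.exp_pos _).le
          · exact hsub.eventuallyLE
  generalize (∫ t in Ioi (0:ℝ), Z2 t * rexp (-δ * t)) = I at *
  have hL2 : Real.log (1 / (δ / 2)) ≤ 2 / δ := by
    have e : 1 / (δ / 2) = 2 / δ := by field_simp
    rw [e]
    exact (Real.log_le_sub_one_of_pos (by positivity)).trans (by linarith)
  have hI : I ≤ (2 / δ + |A|) / δ + 4 + K * (δ / 2 * (2 / δ)) := by
    have h6 := (abs_le.1 h).2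
    have h7 : (Real.log (1 / (δ / 2)) + A) / δ ≤ (2 / δ + |A|) / δ := by
      have := le_abs_self A
      gcongr
    have h8 : K * (δ / 2 * Real.log (1 / (δ / 2))) ≤ K * (δ / 2 * (2 / δ)) := by gcongr
    linarith [Real.pi_le_four]
  have hI2 : δ ^ 2 * I ≤ 6 + |A| + K := by
    have h9 := mul_le_mul_of_nonneg_left hI (sq_nonneg δ)
    have e : δ ^ 2 * ((2 / δ + |A|) / δ + 4 + K * (δ / 2 * (2 / δ))) =
        2 + |A| * δ + 4 * δ ^ 2 + K * δ ^ 2 := by field_simp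
    rw [e] at h9
    have hd2 : δ ^ 2 ≤ 1 := by nlinarith
    have := abs_nonneg A
    nlinarith
  calc _ ≤ _ := b1
    _ ≤ δ ^ 7 * I := by gcongr
    _ = δ ^ 5 * (δ ^ 2 * I) := by ring
    _ ≤ δ ^ 1 * (6 + |A| + K) := by
      apply mul_le_mul _ hI2 (by positivity) (by positivity)
      exact pow_le_pow_of_le_one h0.le (by linarith) (by norm_num)
    _ = _ := by ring

theorem final (y₀ : ℝ) (μ : ℝ → ℝ)
    (hμgrow : ∀ y ∈ Set.Ici y₀, 7 * y * Real.log y ≤ μ y) :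
    ∃ c₀ C δ₀ : ℝ, 0 < C ∧ 0 < δ₀ ∧ ∀ δ : ℝ, δ ∈ Set.Ioc 0 δ₀ →
      |(∫ t in (0:ℝ)..μ (1/δ), Z2 t * Real.exp (-2 * δ * t))
          - (1 / (2*δ)) * Real.log (1/δ)
          - (Real.eulerMascheroniConstant - Real.log (4*Real.pi)) / (2*δ) - c₀|
        ≤ C * δ * Real.log (1/δ) := by
  obtain ⟨K1, hK1, H1⟩ := I_asymp
  obtain ⟨K2, hK2, H2⟩ := tail_bound
  have hy : 0 < |y₀| + 10 := by positivity
  refine ⟨π, K1 + K2, 1 / (|y₀| + 10), by positivity, by positivity, fun δ hδ => ?_⟩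
  have h0 := hδ.1
  have h1' := hδ.2
  have hinv : |y₀| + 10 ≤ 1 / δ := by
    rw [le_div_iff₀ h0]
    rw [le_div_iff₀ hy] at h1'
    linarith
  have h1 : δ ≤ 1 / 10 := h1'.trans
    (one_div_le_one_div_of_le (by norm_num) (by linarith [abs_nonneg y₀]))
  have hm := hμgrow (1 / δ) (by rw [mem_Ici]; linarith [le_abs_self y₀])
  have hL := one_le_log_inv h0 h1
  have hm0 : 0 ≤ μ (1 / δ) := le_trans (by positivity) hm
  have k1 := H1 δ h0 h1
  have k2 := H2 δ _ h0 h1 hm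
  generalize μ (1 / δ) = m at *
  have hI := I_integrable (by positivity : 0 < 2 * δ)
  have split : (∫ t in Ioi (0:ℝ), Z2 t * rexp (-(2 * δ) * t)) =
      (∫ t in (0:ℝ)..m, Z2 t * Real.exp (-2 * δ * t)) +
        ∫ t in Ioi m, Z2 t * rexp (-(2 * δ) * t) := by
    have e : ∀ t, rexp (-2 * δ * t) = rexp (-(2 * δ) * t) := by intro t; ring_nf
    simp only [e]
    rw [intervalIntegral.integral_of_le hm0, ← Ioc_union_Ioi_eq_Ioi hm0]
    apply setIntegral_union (Ioc_disjoint_Ioi le_rfl) measurableSet_Ioi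
    · exact hI.mono_set Ioc_subset_Ioi_self
    · exact hI.mono_set (Ioi_subset_Ioi hm0)
  rw [split] at k1
  generalize (∫ t in (0:ℝ)..m, Z2 t * Real.exp (-2 * δ * t)) = X at *
  generalize (∫ t in Ioi m, Z2 t * rexp (-(2 * δ) * t)) = T at *
  generalize Real.log (1 / δ) = L at *
  have hdL : δ ≤ δ * L := by nlinarith
  have eq : X - (1 / (2*δ)) * L - (Real.eulerMascheroniConstant - Real.log (4*Real.pi)) / (2*δ) - π
      = (X + T - (L + (Real.eulerMascheroniConstant - Real.log (4 * π))) / (2 * δ) - π) - T := by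
    ring
  rw [eq]
  calc _ ≤ _ := abs_sub _ _
    _ ≤ K1 * (δ * L) + K2 * δ := add_le_add k1 k2
    _ ≤ K1 * (δ * L) + K2 * (δ * L) := by gcongr
    _ = _ := by ring

end TKA

/-- For `μ` in the admissible class, there exist `c₀ ∈ ℝ`, `C > 0`, `δ₀ > 0` such that for all
`δ ∈ (0,δ₀]`:
`|∫₀^{μ(1/δ)} |ζ(1/2+it)|² e^{−2δt} dt − (1/(2δ)) ln(1/δ) − D/(2δ) − c₀| ≤ C δ ln(1/δ)`,
where `D = c − ln(4π)` and `c` is the Euler–Mascheroni constant. -/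
theorem truncated_TKA_formula (y₀ : ℝ) (μ : ℝ → ℝ)
    (hμC : ContDiffOn ℝ (⊤ : ℕ∞) μ (Set.Ici y₀))
    (hμmono : StrictMonoOn μ (Set.Ici y₀))
    (hμtop : Tendsto μ atTop atTop)
    (hμpos : ∀ y ∈ Set.Ici y₀, 0 < μ y)
    (hμgrow : ∀ y ∈ Set.Ici y₀, 7 * y * Real.log y ≤ μ y) :
    ∃ c₀ C δ₀ : ℝ, 0 < C ∧ 0 < δ₀ ∧ ∀ δ : ℝ, δ ∈ Set.Ioc 0 δ₀ →
      |(∫ t in (0:ℝ)..μ (1/δ), Z2 t * Real.exp (-2 * δ * t))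
          - (1 / (2*δ)) * Real.log (1/δ)
          - (Real.eulerMascheroniConstant - Real.log (4*Real.pi)) / (2*δ) - c₀|
        ≤ C * δ * Real.log (1/δ) := by
  exact TKA.final y₀ μ hμgrow
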